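/- arXiv:2508.15319 — 2 statements merged into one kernel-verified Lean document; each statement's English description precedes it below -/
import Mathlib

section
/- Let a : ℝ → ℝ be smooth with compact support contained in (−1,1), let â(θ) = ∫_ℝ a(x)·e^{−2πiθx} dx, and fix μ > 0 and γ > 0. For ε ∈ (0,1], δ ∈ (0,1/2] and x ∈ ℝ define 𝔠_ε^{(δ)}(x) = ε^{2γ}·∬_{ℝ²} â(θ₁)·conj(â(θ₂))·e^{2πi√ε(θ₁−θ₂)x}·( ∫_0^∞ e^{−2μs}·( ∫_ℝ |η|·e^{−4π²(s+δ²)[(η+√ε·θ₁)² + (η+√ε·θ₂)²]} dη ) ds ) dθ₁ dθ₂, and C^{(δ)} = ∫_ℝ |η|·e^{−8π²δ²η²} / (2(4π²η² + μ)) dη. Then there exists a constant C, depending only on a and μ, such that for all ε ∈ (0,1] and δ ∈ (0,1/2], sup_{x∈ℝ} |𝔠_ε^{(δ)}(x) − ε^{2γ}·C^{(δ)}·a(√ε·x)²| ≤ C·ε^{2γ+1}. -/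
open MeasureTheory

/-- Fourier transform (with kernel `e^{-2πiθx}`) of a real function. -/
noncomputable def hatF (a : ℝ → ℝ) (θ : ℝ) : ℂ :=
  ∫ x : ℝ, (a x : ℂ) * Complex.exp (-((2 * Real.pi * θ * x : ℝ) * Complex.I))

/-- The logarithmically divergent renormalization constant `C^{(δ)}`. -/
noncomputable def Cdelta (μ δ : ℝ) : ℝ :=
  ∫ η : ℝ, |η| * Real.exp (-8 * Real.pi ^ 2 * δ ^ 2 * η ^ 2) /
    (2 * (4 * Real.pi ^ 2 * η ^ 2 + μ))

/-- The variance `𝔠_ε^{(δ)}(x)` of the mollified stationary linearized solution,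
written as an explicit Fourier integral. -/
noncomputable def cEpsDelta (a : ℝ → ℝ) (μ γ ε δ x : ℝ) : ℂ :=
  ((ε ^ (2 * γ) : ℝ) : ℂ) *
    ∫ θ₁ : ℝ, ∫ θ₂ : ℝ,
      hatF a θ₁ * (starRingEnd ℂ) (hatF a θ₂) *
        Complex.exp ((2 * Real.pi * Real.sqrt ε * (θ₁ - θ₂) * x : ℝ) * Complex.I) *
        (((∫ s in Set.Ioi (0:ℝ),
            Real.exp (-2 * μ * s) *
              ∫ η : ℝ, |η| * Real.exp (-4 * Real.pi ^ 2 * (s + δ ^ 2) *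
                ((η + Real.sqrt ε * θ₁) ^ 2 + (η + Real.sqrt ε * θ₂) ^ 2))) : ℝ) : ℂ)

/-!
The kernel of `cEpsDelta` at `θ₁ = θ₂ = 0` is exactly `Cdelta μ δ` (Fubini), while replacing the
kernel by a constant turns the double frequency integral into that constant times `a (√ε x) ^ 2`
(Fourier inversion). So only the variation of the kernel matters. By completing the square, its
`η`-integral is a Gaussian average of `|η - m|`, where `m` is the mean of the two shifts; the
average exceeds that of `|η|` by at most `2 m ^ 2`, whatever the variance. This uniformity is what
makes the error `O(ε (θ₁ ^ 2 + θ₂ ^ 2))` despite the logarithmic divergence of `Cdelta μ δ` as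
`δ → 0`, and the second moment of the Fourier transform of `a` closes the estimate.
-/

section EvenWeight

theorem abs_sub_add_abs_add_eq_two_nsmul_max {G : Type*} [AddCommGroup G] [LinearOrder G]
    [IsOrderedAddMonoid G] (x m : G) : |x - m| + |x + m| = 2 • max |x| |m| := by
  grind

variable {w : ℝ → ℝ}

theorem integrable_abs_sub_mul (hw : Integrable w) (hxw : Integrable fun x => x * w x) (m : ℝ) :
    Integrable fun x => |x - m| * w x := by
  refine (hxw.sub (hw.const_mul m)).congr'
    (Continuous.aestronglyMeasurable (by fun_prop) |>.mul hw.aestronglyMeasurable)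
    (.of_forall fun x => ?_)
  simp only [Pi.sub_apply, ← sub_mul, norm_mul, Real.norm_eq_abs, abs_abs]

theorem integrable_abs_mul (hw : Integrable w) (hxw : Integrable fun x => x * w x) :
    Integrable fun x => |x| * w x := by
  simpa only [sub_zero] using integrable_abs_sub_mul hw hxw 0

-- Averaging the integral with its reflection replaces `|x - m|` by `(|x - m| + |x + m|) / 2`.
theorem integral_abs_sub_mul_eq_integral_max_abs_mul (heven : w.Even) (hw : Integrable w)
    (hxw : Integrable fun x => x * w x) (m : ℝ) :
    ∫ x, |x - m| * w x = ∫ x, max |x| |m| * w x := by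
  have hreflect : ∫ x, |x + m| * w x = ∫ x, |x - m| * w x := by
    rw [← integral_neg_eq_self]
    congr! 2 with x
    rw [heven x, ← abs_neg, neg_add, neg_neg, sub_eq_add_neg]
  have hplus : Integrable fun x => |x + m| * w x := by
    simpa only [sub_neg_eq_add] using integrable_abs_sub_mul hw hxw (-m)
  have hsum := integral_add (integrable_abs_sub_mul hw hxw m) hplus
  simp only [← add_mul, abs_sub_add_abs_add_eq_two_nsmul_max, nsmul_eq_mul, Nat.cast_ofNat,
    mul_assoc, integral_const_mul, hreflect] at hsum
  linarith

theorem integrable_max_abs_mul (hw : Integrable w) (hxw : Integrable fun x => x * w x) (m : ℝ) :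
    Integrable fun x => max |x| |m| * w x := by
  have hminus := integrable_abs_sub_mul hw hxw m
  have hplus := integrable_abs_sub_mul hw hxw (-m)
  refine ((hminus.add hplus).const_mul 2⁻¹).congr (.of_forall fun x => ?_)
  simp only [Pi.add_apply, sub_neg_eq_add, ← add_mul, abs_sub_add_abs_add_eq_two_nsmul_max]
  ring

theorem integral_abs_mul_le_integral_abs_sub_mul (heven : w.Even) (hw : Integrable w)
    (hxw : Integrable fun x => x * w x) (hw0 : ∀ x, 0 ≤ w x) (m : ℝ) :
    ∫ x, |x| * w x ≤ ∫ x, |x - m| * w x := by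
  rw [integral_abs_sub_mul_eq_integral_max_abs_mul heven hw hxw]
  refine integral_mono (integrable_abs_mul hw hxw) (integrable_max_abs_mul hw hxw m) fun x => ?_
  exact mul_le_mul_of_nonneg_right (le_max_left _ _) (hw0 x)

theorem integral_abs_sub_mul_le_integral_abs_mul_add (heven : w.Even) (hw : Integrable w)
    (hxw : Integrable fun x => x * w x) (hw0 : ∀ x, 0 ≤ w x) {B : ℝ} (hwB : ∀ x, w x ≤ B) (m : ℝ) :
    ∫ x, |x - m| * w x ≤ (∫ x, |x| * w x) + 2 * B * m ^ 2 := by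
  have hbox : Integrable ((Set.Icc (-|m|) |m|).indicator fun _ => |m| * B) :=
    (integrable_indicator_iff measurableSet_Icc).2 (integrableOn_const (by simp))
  have hbox_integral : ∫ x, (Set.Icc (-|m|) |m|).indicator (fun _ => |m| * B) x
      = 2 * B * m ^ 2 := by
    rw [integral_indicator measurableSet_Icc, setIntegral_const, Real.volume_real_Icc,
      max_eq_left (by linarith [abs_nonneg m]), smul_eq_mul, ← sq_abs m]
    ring
  rw [integral_abs_sub_mul_eq_integral_max_abs_mul heven hw hxw, ← hbox_integral,
    ← integral_add (integrable_abs_mul hw hxw) hbox]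
  refine integral_mono (integrable_max_abs_mul hw hxw m)
    ((integrable_abs_mul hw hxw).add hbox) fun x => ?_
  by_cases hx : x ∈ Set.Icc (-|m|) |m|
  · simp only [Set.indicator_of_mem hx, max_eq_right (abs_le.2 hx)]
    nlinarith [mul_nonneg (abs_nonneg x) (hw0 x),
      mul_le_mul_of_nonneg_left (hwB x) (abs_nonneg m)]
  · have hmx : |m| ≤ |x| := (lt_of_not_ge fun h => hx (abs_le.1 h)).le
    simp only [Set.indicator_of_notMem hx, max_eq_left hmx, add_zero, le_refl]

theorem integral_abs_mul_exp_neg_mul_sq {b : ℝ} (hb : 0 < b) :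
    ∫ x : ℝ, |x| * Real.exp (-b * x ^ 2) = b⁻¹ := by
  have habs := integral_comp_abs (f := fun x => x * Real.exp (-b * x ^ 2))
  have hIoi := integral_rpow_mul_exp_neg_mul_rpow (p := 2) (q := 1) two_pos (by norm_num) hb
  norm_num [Real.rpow_neg_one] at hIoi
  simp only [sq_abs, neg_mul, hIoi] at habs ⊢
  linarith

theorem integral_abs_sub_mul_exp_neg_mul_sq_mem_Icc {b : ℝ} (hb : 0 < b) (m : ℝ) :
    ∫ x : ℝ, |x - m| * Real.exp (-b * x ^ 2) ∈ Set.Icc b⁻¹ (b⁻¹ + 2 * m ^ 2) := by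
  have heven : Function.Even fun x : ℝ => Real.exp (-b * x ^ 2) := fun x => by simp only [neg_sq]
  have hle_one (x : ℝ) : Real.exp (-b * x ^ 2) ≤ 1 :=
    Real.exp_le_one_iff.2 (by nlinarith [sq_nonneg x])
  have hint := integrable_exp_neg_mul_sq hb
  have hxint := integrable_mul_exp_neg_mul_sq hb
  rw [← integral_abs_mul_exp_neg_mul_sq hb]
  refine ⟨integral_abs_mul_le_integral_abs_sub_mul heven hint hxint (fun _ => by positivity) m, ?_⟩
  simpa only [mul_one] using integral_abs_sub_mul_le_integral_abs_mul_add heven hint hxint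
    (fun _ => by positivity) hle_one m

end EvenWeight

section VarianceKernel

open scoped Real

/-- The frequency integral `∫ |η| e^{-4π²T[(η+α)²+(η+β)²]} dη` of `cEpsDelta`, with
`T = s + δ²`, `α = √ε θ₁` and `β = √ε θ₂`. -/
noncomputable def frequencyIntegral (T α β : ℝ) : ℝ :=
  ∫ η : ℝ, |η| * Real.exp (-4 * π ^ 2 * T * ((η + α) ^ 2 + (η + β) ^ 2))

-- Complete the square around the midpoint `-(α + β) / 2` and translate.
theorem frequencyIntegral_eq (T α β : ℝ) :
    frequencyIntegral T α β = Real.exp (-(2 * π ^ 2 * T * (α - β) ^ 2)) *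
      ∫ η : ℝ, |η - (α + β) / 2| * Real.exp (-(8 * π ^ 2 * T) * η ^ 2) := by
  rw [frequencyIntegral, ← integral_const_mul,
    ← integral_sub_right_eq_self (μ := volume) _ ((α + β) / 2)]
  congr! 2
  rw [mul_left_comm, ← Real.exp_add]
  ring_nf

theorem frequencyIntegral_nonneg (T α β : ℝ) : 0 ≤ frequencyIntegral T α β :=
  integral_nonneg fun _ => by positivity

theorem frequencyIntegral_zero_zero {T : ℝ} (hT : 0 < T) :
    frequencyIntegral T 0 0 = (8 * π ^ 2 * T)⁻¹ := by
  rw [frequencyIntegral_eq, ← integral_abs_mul_exp_neg_mul_sq (by positivity)]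
  simp

-- Recentring costs `(α + β)² / 2`; the factor `e^{-2π²T(α-β)²}` costs at most `(α - β)² / 4`,
-- since `T` cancels against the value `(8π²T)⁻¹` at the origin.
theorem abs_frequencyIntegral_sub_le {T : ℝ} (hT : 0 < T) (α β : ℝ) :
    |frequencyIntegral T α β - frequencyIntegral T 0 0| ≤ α ^ 2 + β ^ 2 := by
  have hb : 0 < 8 * π ^ 2 * T := by positivity
  rw [frequencyIntegral_zero_zero hT, frequencyIntegral_eq]
  obtain ⟨hlower, hupper⟩ := integral_abs_sub_mul_exp_neg_mul_sq_mem_Icc hb ((α + β) / 2)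
  set J := ∫ η : ℝ, |η - (α + β) / 2| * Real.exp (-(8 * π ^ 2 * T) * η ^ 2)
  set u := 2 * π ^ 2 * T * (α - β) ^ 2 with hu
  have hb_inv : 0 < (8 * π ^ 2 * T)⁻¹ := by positivity
  have hexp_le : Real.exp (-u) ≤ 1 := Real.exp_le_one_iff.2 (by linarith [show 0 ≤ u by positivity])
  have hexp_ge : 1 - u ≤ Real.exp (-u) := Real.one_sub_le_exp_neg u
  have hcancel : u * (8 * π ^ 2 * T)⁻¹ = (α - β) ^ 2 / 4 := by
    rw [hu]
    field_simp
    ring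
  have hlower' : (1 - u) * (8 * π ^ 2 * T)⁻¹ ≤ Real.exp (-u) * J := by gcongr
  have hupper' : Real.exp (-u) * J ≤ J := mul_le_of_le_one_left (hb_inv.le.trans hlower) hexp_le
  rw [abs_le]
  constructor <;> nlinarith [sq_nonneg (α + β), sq_nonneg (α - β)]

theorem stronglyMeasurable_frequencyIntegral :
    StronglyMeasurable fun q : ℝ × ℝ × ℝ => frequencyIntegral q.1 q.2.1 q.2.2 :=
  StronglyMeasurable.integral_prod_right
    (f := fun (q : ℝ × ℝ × ℝ) (η : ℝ) =>
      |η| * Real.exp (-4 * π ^ 2 * q.1 * ((η + q.2.1) ^ 2 + (η + q.2.2) ^ 2)))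
    (Continuous.stronglyMeasurable (by fun_prop))

/-- The time-integrated kernel of `cEpsDelta`, as a function of the rescaled frequencies
`α = √ε θ₁` and `β = √ε θ₂`. -/
noncomputable def varianceKernel (μ δ α β : ℝ) : ℝ :=
  ∫ s in Set.Ioi (0 : ℝ), Real.exp (-2 * μ * s) * frequencyIntegral (s + δ ^ 2) α β

theorem stronglyMeasurable_varianceKernel (μ δ : ℝ) :
    StronglyMeasurable fun p : ℝ × ℝ => varianceKernel μ δ p.1 p.2 :=
  StronglyMeasurable.integral_prod_right
    (f := fun (p : ℝ × ℝ) (s : ℝ) =>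
      Real.exp (-2 * μ * s) * frequencyIntegral (s + δ ^ 2) p.1 p.2)
    ((Continuous.stronglyMeasurable (by fun_prop)).mul
      (stronglyMeasurable_frequencyIntegral.comp_measurable
        (g := fun q : (ℝ × ℝ) × ℝ => (q.2 + δ ^ 2, q.1.1, q.1.2)) (by fun_prop)))

variable {μ δ : ℝ}

theorem integrableOn_exp_neg_two_mul (hμ : 0 < μ) :
    IntegrableOn (fun s : ℝ => Real.exp (-2 * μ * s)) (Set.Ioi 0) :=
  integrableOn_exp_mul_Ioi (by linarith) 0

theorem integrableOn_exp_mul_frequencyIntegral (hμ : 0 < μ) (hδ : δ ≠ 0) (α β : ℝ) :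
    IntegrableOn (fun s : ℝ => Real.exp (-2 * μ * s) * frequencyIntegral (s + δ ^ 2) α β)
      (Set.Ioi 0) := by
  have hmeas : StronglyMeasurable fun s : ℝ => frequencyIntegral (s + δ ^ 2) α β :=
    stronglyMeasurable_frequencyIntegral.comp_measurable
      (g := fun s : ℝ => (s + δ ^ 2, α, β)) (by fun_prop)
  refine ((integrableOn_exp_neg_two_mul hμ).mul_const
    ((8 * π ^ 2 * δ ^ 2)⁻¹ + (α ^ 2 + β ^ 2))).mono'
    ((Continuous.aestronglyMeasurable (by fun_prop)).mul hmeas.aestronglyMeasurable) ?_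
  filter_upwards [ae_restrict_mem measurableSet_Ioi] with s (hs : 0 < s)
  have hT : 0 < s + δ ^ 2 := by positivity
  have hinv : frequencyIntegral (s + δ ^ 2) 0 0 ≤ (8 * π ^ 2 * δ ^ 2)⁻¹ := by
    rw [frequencyIntegral_zero_zero hT]
    gcongr
    linarith
  rw [Real.norm_of_nonneg (mul_nonneg (Real.exp_pos _).le (frequencyIntegral_nonneg _ _ _))]
  gcongr
  linarith [(abs_le.1 (abs_frequencyIntegral_sub_le hT α β)).2]

theorem abs_varianceKernel_sub_le (hμ : 0 < μ) (hδ : δ ≠ 0) (α β : ℝ) :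
    |varianceKernel μ δ α β - varianceKernel μ δ 0 0| ≤ (α ^ 2 + β ^ 2) / (2 * μ) := by
  rw [varianceKernel, varianceKernel,
    ← integral_sub (integrableOn_exp_mul_frequencyIntegral hμ hδ α β)
      (integrableOn_exp_mul_frequencyIntegral hμ hδ 0 0), ← Real.norm_eq_abs]
  calc
    _ ≤ ∫ s in Set.Ioi (0 : ℝ), Real.exp (-2 * μ * s) * (α ^ 2 + β ^ 2) := by
      refine norm_integral_le_of_norm_le ((integrableOn_exp_neg_two_mul hμ).mul_const _) ?_
      filter_upwards [ae_restrict_mem measurableSet_Ioi] with s (hs : 0 < s)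
      rw [← mul_sub, norm_mul, Real.norm_eq_abs, Real.abs_exp, Real.norm_eq_abs]
      gcongr
      exact abs_frequencyIntegral_sub_le (by positivity) α β
    _ = (α ^ 2 + β ^ 2) / (2 * μ) := by
      rw [integral_mul_const, integral_exp_mul_Ioi (by linarith) 0, mul_zero, Real.exp_zero]
      field_simp

theorem integral_exp_mul_abs_mul_exp (hμ : 0 < μ) (δ η : ℝ) :
    ∫ s in Set.Ioi (0 : ℝ), Real.exp (-2 * μ * s) *
        (|η| * Real.exp (-(8 * π ^ 2 * (s + δ ^ 2)) * η ^ 2)) =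
      |η| * Real.exp (-8 * π ^ 2 * δ ^ 2 * η ^ 2) / (2 * (4 * π ^ 2 * η ^ 2 + μ)) := by
  have hrate : 0 < 2 * (4 * π ^ 2 * η ^ 2 + μ) := by positivity
  have hsplit (s : ℝ) : Real.exp (-2 * μ * s) *
      (|η| * Real.exp (-(8 * π ^ 2 * (s + δ ^ 2)) * η ^ 2)) =
      |η| * Real.exp (-8 * π ^ 2 * δ ^ 2 * η ^ 2) *
        Real.exp (-(2 * (4 * π ^ 2 * η ^ 2 + μ)) * s) := by
    rw [mul_left_comm, ← Real.exp_add, mul_assoc |η|, ← Real.exp_add]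
    ring_nf
  simp only [hsplit]
  rw [integral_const_mul, integral_exp_mul_Ioi (neg_neg_of_pos hrate), mul_zero, Real.exp_zero,
    neg_div_neg_eq, mul_one_div]

theorem integrable_exp_mul_abs_mul_exp (hμ : 0 < μ) (hδ : δ ≠ 0) :
    Integrable (fun p : ℝ × ℝ => Real.exp (-2 * μ * p.1) *
        (|p.2| * Real.exp (-(8 * π ^ 2 * (p.1 + δ ^ 2)) * p.2 ^ 2)))
      ((volume.restrict (Set.Ioi 0)).prod volume) := by
  have hb : 0 < 8 * π ^ 2 * δ ^ 2 := by positivity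
  refine ((integrableOn_exp_neg_two_mul hμ).mul_prod (integrable_abs_mul
    (integrable_exp_neg_mul_sq hb) (integrable_mul_exp_neg_mul_sq hb))).mono'
    (Continuous.aestronglyMeasurable (by fun_prop)) ?_
  have hpos : ∀ᵐ p : ℝ × ℝ ∂(volume.restrict (Set.Ioi 0)).prod volume, 0 < p.1 :=
    Measure.quasiMeasurePreserving_fst.ae (ae_restrict_mem measurableSet_Ioi)
  filter_upwards [hpos] with p hp
  rw [Real.norm_of_nonneg (by positivity)]
  gcongr
  linarith

theorem Cdelta_eq_varianceKernel (hμ : 0 < μ) (hδ : δ ≠ 0) :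
    Cdelta μ δ = varianceKernel μ δ 0 0 := by
  simp only [Cdelta, ← integral_exp_mul_abs_mul_exp hμ]
  rw [← integral_integral_swap (integrable_exp_mul_abs_mul_exp hμ hδ), varianceKernel]
  refine setIntegral_congr_fun measurableSet_Ioi fun s (hs : 0 < s) => ?_
  have hT : 0 < s + δ ^ 2 := by positivity
  simp only [integral_const_mul]
  rw [integral_abs_mul_exp_neg_mul_sq (by positivity), frequencyIntegral_zero_zero hT]

end VarianceKernel

section ProductKernel

variable {X Y 𝕜 : Type*} [MeasurableSpace X] [MeasurableSpace Y] [RCLike 𝕜]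
  {μ : Measure X} {ν : Measure Y} [SFinite μ] [SFinite ν]

theorem norm_integral_integral_mul_kernel_sub_le {f : X → 𝕜} {g : Y → 𝕜} {K : X → Y → 𝕜} {c : 𝕜}
    {M : X → ℝ} {N : Y → ℝ} (hf : Integrable f μ) (hg : Integrable g ν)
    (hMf : Integrable (fun x => M x * ‖f x‖) μ) (hNg : Integrable (fun y => N y * ‖g y‖) ν)
    (hK : AEStronglyMeasurable (Function.uncurry K) (μ.prod ν))
    (hKc : ∀ x y, ‖K x y - c‖ ≤ M x + N y) :
    ‖(∫ x, ∫ y, f x * g y * K x y ∂ν ∂μ) - (∫ x, f x ∂μ) * (∫ y, g y ∂ν) * c‖ ≤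
      (∫ x, M x * ‖f x‖ ∂μ) * (∫ y, ‖g y‖ ∂ν) + (∫ x, ‖f x‖ ∂μ) * ∫ y, N y * ‖g y‖ ∂ν := by
  have hfg := hf.mul_prod hg
  have hdom₁ := hMf.mul_prod hg.norm
  have hdom₂ := hf.norm.mul_prod hNg
  have hbound (p : X × Y) : ‖f p.1 * g p.2 * (K p.1 p.2 - c)‖ ≤
      M p.1 * ‖f p.1‖ * ‖g p.2‖ + ‖f p.1‖ * (N p.2 * ‖g p.2‖) := by
    rw [norm_mul, norm_mul]
    calc
      _ ≤ ‖f p.1‖ * ‖g p.2‖ * (M p.1 + N p.2) := by gcongr; exact hKc _ _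
      _ = _ := by ring
  have herror : Integrable (fun p : X × Y => f p.1 * g p.2 * (K p.1 p.2 - c)) (μ.prod ν) :=
    (hdom₁.add hdom₂).mono' (hfg.aestronglyMeasurable.mul (hK.sub aestronglyMeasurable_const))
      (.of_forall hbound)
  have hfgK : Integrable (fun p : X × Y => f p.1 * g p.2 * K p.1 p.2) (μ.prod ν) :=
    (herror.add (hfg.mul_const c)).congr (.of_forall fun p => by
      simp only [Pi.add_apply]
      ring)
  rw [← integral_prod _ hfgK, ← integral_prod_mul, ← integral_mul_const,
    ← integral_sub hfgK (hfg.mul_const c), ← integral_prod_mul, ← integral_prod_mul,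
    ← integral_add hdom₁ hdom₂]
  simp only [← mul_sub]
  exact norm_integral_le_of_norm_le (hdom₁.add hdom₂) (.of_forall hbound)

end ProductKernel

section Fourier

open scoped FourierTransform

theorem integrable_of_integrable_sq_mul_norm {E : Type*} [NormedAddCommGroup E] {f : ℝ → E}
    {B : ℝ} (hf : AEStronglyMeasurable f) (hB : ∀ θ, ‖f θ‖ ≤ B)
    (hsq : Integrable fun θ => θ ^ 2 * ‖f θ‖) : Integrable f := by
  have hbox : Integrable ((Set.Icc (-1 : ℝ) 1).indicator fun _ => B) :=
    (integrable_indicator_iff measurableSet_Icc).2 (integrableOn_const (by simp))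
  refine (hbox.add hsq).mono' hf (.of_forall fun θ => ?_)
  rw [Pi.add_apply]
  by_cases hθ : θ ∈ Set.Icc (-1 : ℝ) 1
  · rw [Set.indicator_of_mem hθ]
    linarith [hB θ, show 0 ≤ θ ^ 2 * ‖f θ‖ by positivity]
  · have hone : 1 ≤ θ ^ 2 := by
      rw [one_le_sq_iff_one_le_abs]
      exact (lt_of_not_ge fun h => hθ (abs_le.1 h)).le
    rw [Set.indicator_of_notMem hθ, zero_add]
    exact le_mul_of_one_le_left (norm_nonneg _) hone

variable {a : ℝ → ℝ}

theorem hatF_eq_fourier (a : ℝ → ℝ) : hatF a = 𝓕 fun x => (a x : ℂ) := by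
  ext θ
  rw [Real.fourier_real_eq_integral_exp_smul, hatF]
  congr! 2 with x
  rw [smul_eq_mul, mul_comm]
  congr 2
  push_cast
  ring

theorem continuous_hatF (ha : Integrable a) : Continuous (hatF a) := by
  rw [hatF_eq_fourier]
  exact VectorFourier.fourierIntegral_continuous Real.continuous_fourierChar
    continuous_inner ha.ofReal

theorem norm_hatF_le (a : ℝ → ℝ) (θ : ℝ) : ‖hatF a θ‖ ≤ ∫ x, ‖a x‖ := by
  rw [hatF_eq_fourier]
  exact (VectorFourier.norm_fourierIntegral_le_integral_norm _ _ _ _ _).trans_eq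
    (by simp only [Complex.norm_real])

theorem integrable_hatF (ha : Integrable a) (hsq : Integrable fun θ => θ ^ 2 * ‖hatF a θ‖) :
    Integrable (hatF a) :=
  integrable_of_integrable_sq_mul_norm (continuous_hatF ha).aestronglyMeasurable (norm_hatF_le a)
    hsq

theorem integral_hatF_mul_cexp (hcont : Continuous a) (ha : Integrable a)
    (hhat : Integrable (hatF a)) (y : ℝ) :
    ∫ θ, hatF a θ * Complex.exp ((2 * Real.pi * θ * y : ℝ) * Complex.I) = a y := by
  rw [hatF_eq_fourier] at hhat ⊢
  have hinv := congr_fun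
    ((Complex.continuous_ofReal.comp hcont).fourierInv_fourier_eq ha.ofReal hhat) y
  rw [Real.fourierInv_eq'] at hinv
  refine Eq.trans ?_ hinv
  congr! 2 with θ
  rw [smul_eq_mul, mul_comm, RCLike.inner_apply, conj_trivial]
  congr 4
  ring

theorem integrable_pow_mul_norm_hatF (hsmooth : ContDiff ℝ (⊤ : ℕ∞) a)
    (hsupp : HasCompactSupport a) (k : ℕ) : Integrable fun θ => ‖θ‖ ^ k * ‖hatF a θ‖ := by
  have hsupp' : HasCompactSupport fun x => (a x : ℂ) := hsupp.comp_left Complex.ofReal_zero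
  have hsmooth' : ContDiff ℝ (⊤ : ℕ∞) fun x => (a x : ℂ) :=
    Complex.ofRealCLM.contDiff.comp hsmooth
  rw [hatF_eq_fourier]
  exact (𝓕 (hsupp'.toSchwartzMap hsmooth')).integrable_pow_mul volume k

end Fourier

section Renormalization

open scoped ComplexConjugate

/-- The inverse Fourier integrand `â(θ) e^{2πiθy}`, whose integral over `θ` is `a y`. -/
noncomputable def inversionIntegrand (a : ℝ → ℝ) (y θ : ℝ) : ℂ :=
  hatF a θ * Complex.exp ((2 * Real.pi * θ * y : ℝ) * Complex.I)

theorem norm_inversionIntegrand (a : ℝ → ℝ) (y θ : ℝ) :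
    ‖inversionIntegrand a y θ‖ = ‖hatF a θ‖ := by
  rw [inversionIntegrand, norm_mul, Complex.norm_exp_ofReal_mul_I, mul_one]

theorem integrable_inversionIntegrand {a : ℝ → ℝ} (hhat : Integrable (hatF a)) (y : ℝ) :
    Integrable (inversionIntegrand a y) :=
  hhat.congr' (hhat.aestronglyMeasurable.mul (Continuous.aestronglyMeasurable (by fun_prop)))
    (.of_forall fun θ => (norm_inversionIntegrand a y θ).symm)

theorem cEpsDelta_eq (a : ℝ → ℝ) (μ γ ε δ x : ℝ) :
    cEpsDelta a μ γ ε δ x = ((ε ^ (2 * γ) : ℝ) : ℂ) * ∫ θ₁ : ℝ, ∫ θ₂ : ℝ,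
      inversionIntegrand a (√ε * x) θ₁ * conj (inversionIntegrand a (√ε * x) θ₂) *
        (varianceKernel μ δ (√ε * θ₁) (√ε * θ₂) : ℂ) := by
  rw [cEpsDelta]
  congr! 5 with θ₁ θ₂
  have hexp : Complex.exp ((2 * Real.pi * √ε * (θ₁ - θ₂) * x : ℝ) * Complex.I) =
      Complex.exp ((2 * Real.pi * θ₁ * (√ε * x) : ℝ) * Complex.I) *
        conj (Complex.exp ((2 * Real.pi * θ₂ * (√ε * x) : ℝ) * Complex.I)) := by
    rw [← Complex.exp_conj, ← Complex.exp_add, map_mul, Complex.conj_ofReal, Complex.conj_I]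
    congr 1
    push_cast
    ring
  simp only [inversionIntegrand, varianceKernel, frequencyIntegral, hexp, map_mul]
  ring

variable {a : ℝ → ℝ} {μ ε δ : ℝ}

theorem norm_varianceKernel_sub_Cdelta_le (hμ : 0 < μ) (hε : 0 < ε) (hδ : δ ≠ 0) (θ₁ θ₂ : ℝ) :
    ‖(varianceKernel μ δ (√ε * θ₁) (√ε * θ₂) : ℂ) - Cdelta μ δ‖ ≤
      ε / (2 * μ) * θ₁ ^ 2 + ε / (2 * μ) * θ₂ ^ 2 := by
  rw [← Complex.ofReal_sub, Complex.norm_real, Real.norm_eq_abs, Cdelta_eq_varianceKernel hμ hδ]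
  refine (abs_varianceKernel_sub_le hμ hδ _ _).trans_eq ?_
  rw [mul_pow, mul_pow, Real.sq_sqrt hε.le]
  ring

theorem norm_integral_integral_inversionIntegrand_sub_le (hcont : Continuous a)
    (ha : Integrable a) (hsq : Integrable fun θ => θ ^ 2 * ‖hatF a θ‖) (hμ : 0 < μ) (hε : 0 < ε)
    (hδ : δ ≠ 0) (y : ℝ) :
    ‖(∫ θ₁ : ℝ, ∫ θ₂ : ℝ, inversionIntegrand a y θ₁ * conj (inversionIntegrand a y θ₂) *
        (varianceKernel μ δ (√ε * θ₁) (√ε * θ₂) : ℂ)) - (a y : ℂ) * a y * Cdelta μ δ‖ ≤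
      (∫ θ, θ ^ 2 * ‖hatF a θ‖) * (∫ θ, ‖hatF a θ‖) / μ * ε := by
  have hhat := integrable_hatF ha hsq
  have hA := integrable_inversionIntegrand hhat y
  have hA_integral : ∫ θ, inversionIntegrand a y θ = a y := integral_hatF_mul_cexp hcont ha hhat y
  have hA_conj : Integrable fun θ => conj (inversionIntegrand a y θ) :=
    Complex.conjCLE.integrable_comp_iff.2 hA
  have hmoment : Integrable fun θ => ε / (2 * μ) * θ ^ 2 * ‖hatF a θ‖ := by
    simpa only [mul_assoc] using hsq.const_mul (ε / (2 * μ))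
  have hK : StronglyMeasurable fun p : ℝ × ℝ => varianceKernel μ δ (√ε * p.1) (√ε * p.2) :=
    (stronglyMeasurable_varianceKernel μ δ).comp_measurable
      (g := fun p : ℝ × ℝ => (√ε * p.1, √ε * p.2)) (by fun_prop)
  have hperturb := norm_integral_integral_mul_kernel_sub_le
    (K := fun θ₁ θ₂ => (varianceKernel μ δ (√ε * θ₁) (√ε * θ₂) : ℂ)) hA hA_conj
    (by simpa only [norm_inversionIntegrand] using hmoment)
    (by simpa only [RCLike.norm_conj, norm_inversionIntegrand] using hmoment)
    (Complex.continuous_ofReal.comp_stronglyMeasurable hK).aestronglyMeasurable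
    (norm_varianceKernel_sub_Cdelta_le hμ hε hδ)
  simp only [RCLike.norm_conj, norm_inversionIntegrand, integral_conj, hA_integral,
    Complex.conj_ofReal, mul_assoc, integral_const_mul] at hperturb ⊢
  refine hperturb.trans_eq ?_
  field_simp
  ring

theorem norm_cEpsDelta_sub_le (hcont : Continuous a) (ha : Integrable a)
    (hsq : Integrable fun θ => θ ^ 2 * ‖hatF a θ‖) (hμ : 0 < μ) (hε : 0 < ε) (hδ : δ ≠ 0)
    (γ x : ℝ) :
    ‖cEpsDelta a μ γ ε δ x - ((ε ^ (2 * γ) * Cdelta μ δ * a (√ε * x) ^ 2 : ℝ) : ℂ)‖ ≤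
      (∫ θ, θ ^ 2 * ‖hatF a θ‖) * (∫ θ, ‖hatF a θ‖) / μ * ε ^ (2 * γ + 1) := by
  have hmain : ((ε ^ (2 * γ) * Cdelta μ δ * a (√ε * x) ^ 2 : ℝ) : ℂ) =
      ((ε ^ (2 * γ) : ℝ) : ℂ) * ((a (√ε * x) : ℂ) * a (√ε * x) * Cdelta μ δ) := by
    push_cast
    ring
  rw [cEpsDelta_eq, hmain, ← mul_sub, norm_mul, Complex.norm_real,
    Real.norm_of_nonneg (by positivity), Real.rpow_add hε, Real.rpow_one, mul_left_comm]
  gcongr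
  exact norm_integral_integral_inversionIntegrand_sub_le hcont ha hsq hμ hε hδ (√ε * x)

end Renormalization

theorem stmt_4_general {a : ℝ → ℝ} (hcont : Continuous a) (ha : Integrable a)
    (hsq : Integrable fun θ => θ ^ 2 * ‖hatF a θ‖) {μ : ℝ} (hμ : 0 < μ) :
    ∃ C > 0, ∀ γ ε δ x : ℝ, 0 < ε → δ ≠ 0 →
      ‖cEpsDelta a μ γ ε δ x - ((ε ^ (2 * γ) * Cdelta μ δ * a (√ε * x) ^ 2 : ℝ) : ℂ)‖ ≤
        C * ε ^ (2 * γ + 1) := by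
  set M := (∫ θ, θ ^ 2 * ‖hatF a θ‖) * (∫ θ, ‖hatF a θ‖) / μ
  have hM : 0 ≤ M := by positivity
  refine ⟨M + 1, add_pos_of_nonneg_of_pos hM one_pos, fun γ ε δ x hε hδ => ?_⟩
  refine (norm_cEpsDelta_sub_le hcont ha hsq hμ hε hδ γ x).trans ?_
  gcongr
  exact le_add_of_nonneg_right zero_le_one

/-- Approximation of the renormalization function `𝔠_ε^{(δ)}` by
`ε^{2γ} C^{(δ)} a_ε²`, with error of order `ε^{2γ+1}` uniformly in `x` and `δ`. -/
theorem stmt_4 (a : ℝ → ℝ) (ha : ContDiff ℝ (⊤ : ℕ∞) a)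
    (hsupp : Function.support a ⊆ Set.Ioo (-1 : ℝ) 1)
    (μ γ : ℝ) (hμ : 0 < μ) (hγ : 0 < γ) :
    ∃ C > (0:ℝ), ∀ ε ∈ Set.Ioc (0:ℝ) 1, ∀ δ ∈ Set.Ioc (0:ℝ) (1/2), ∀ x : ℝ,
      ‖cEpsDelta a μ γ ε δ x -
          ((ε ^ (2 * γ) * Cdelta μ δ * (a (Real.sqrt ε * x)) ^ 2 : ℝ) : ℂ)‖
        ≤ C * ε ^ (2 * γ + 1) := by
  have hc : HasCompactSupport a := .of_support_subset_isCompact isCompact_Icc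
    (hsupp.trans Set.Ioo_subset_Icc_self)
  obtain ⟨C, hC, hbound⟩ := stmt_4_general ha.continuous
    (ha.continuous.integrable_of_hasCompactSupport hc)
    (by simpa only [Real.norm_eq_abs, sq_abs] using integrable_pow_mul_norm_hatF ha hc 2) hμ
  exact ⟨C, hC, fun ε hε δ hδ x => hbound γ ε δ x hε.1 hδ.1.ne'⟩
end

section
/- Let C_𝔣 > 0 satisfy 1/C_𝔣 = ∫_ℝ (1 − cos(2πz))/|z|^{3/2} dz, and for χ : ℝ² → ℝ define (√𝔇_{y₁}χ)(y₁,y₂) = C_𝔣·∫_ℝ (χ(y₁,y₂) − χ(y₁−z,y₂))/|z|^{3/2} dz, define √𝔇_{y₂} analogously, and √𝔇^{⊗2} = √𝔇_{y₁}√𝔇_{y₂}. Suppose φ : ℝ² → ℝ is continuous and there exist C₀, λ > 0 such that: |φ(y₁,y₂)| ≤ C₀·e^{−λ(|y₁|+|y₂|)} for all (y₁,y₂); all the singular integrals defining √𝔇_{y₁}φ, √𝔇_{y₂}φ, √𝔇^{⊗2}φ, and √𝔇^{⊗2}((y₁+y₂)·φ) converge absolutely; and |(√𝔇_{y₁}φ)(y₁,y₂)|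 ≤ C₀·⟨y₁⟩^{−3/2}·e^{−λ|y₂|}, |(√𝔇_{y₂}φ)(y₁,y₂)| ≤ C₀·⟨y₂⟩^{−3/2}·e^{−λ|y₁|} for all (y₁,y₂), and |(√𝔇^{⊗2}φ)(y,y)| ≤ C₀·⟨y⟩^{−3} for all y. Then there exists C > 0, depending only on C₀ and λ, such that |(√𝔇^{⊗2}((y₁+y₂)·φ))(y,y)| ≤ C·⟨y⟩^{−2} for all y ∈ ℝ. -/
open MeasureTheory

/-- The `1/2`-fractional derivative in the first variable, in singular-integral form. -/
noncomputable def sqrtD1 (Cf : ℝ) (χ : ℝ → ℝ → ℝ) (x₁ x₂ : ℝ) : ℝ :=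
  Cf * ∫ z : ℝ, (χ x₁ x₂ - χ (x₁ - z) x₂) / |z| ^ ((3:ℝ)/2)

/-- The `1/2`-fractional derivative in the second variable, in singular-integral form. -/
noncomputable def sqrtD2 (Cf : ℝ) (χ : ℝ → ℝ → ℝ) (x₁ x₂ : ℝ) : ℝ :=
  Cf * ∫ z : ℝ, (χ x₁ x₂ - χ x₁ (x₂ - z)) / |z| ^ ((3:ℝ)/2)

/-- The cross fractional derivative `√𝔇^{⊗2} = √𝔇_{y₁}√𝔇_{y₂}`. -/
noncomputable def sqrtDD (Cf : ℝ) (χ : ℝ → ℝ → ℝ) : ℝ → ℝ → ℝ :=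
  sqrtD1 Cf (sqrtD2 Cf χ)

/-!
Commuting the weight `y₁ + y₂` past `√𝔇_{y₂}` and then past `√𝔇_{y₁}` costs one commutator each
time, so on the diagonal `√𝔇^{⊗2}((y₁ + y₂) φ)` is the sum of `2y √𝔇^{⊗2} φ`, the commutator
`[√𝔇_{y₁}, y₁]` applied to `√𝔇_{y₂} φ`, and `√𝔇_{y₁}` of `[√𝔇_{y₂}, y₂] φ`. A commutator is
convolution with the odd kernel `z / |z| ^ p`, `p = 3 / 2`, and against exponential decay this
kernel gives a Riesz potential decaying like `|y| ^ (1 - p)`; together with the factor `⟨y⟩ ^ (-p)`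
from the fractional derivatives of `φ` this is the claimed rate.

In the last term `√𝔇_{y₁}` has to be moved under the commutator integral, although the double
integral need not converge absolutely. Instead one tests against the fractional derivative of a bump
concentrating at `y`: Fubini applies to the tested integral, and the limit recovers `√𝔇_{y₁}`. That
pointwise bounds on the fractional derivative of a continuous function pass to its tested version
follows by approximation with sup-convolutions, which are Lipschitz and inherit one-sided bounds.
-/

section

open Filter Topology Set

variable {p : ℝ}

/-- The difference quotient of `f` at `u` with increment `z`, normalised by the homogeneous kernel
`|z| ^ p`: the integrand of the fractional derivative of order `p - 1`. -/
noncomputable def diffQuot (p : ℝ) (f : ℝ → ℝ) (u z : ℝ) : ℝ :=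
  (f u - f (u - z)) / |z| ^ p

/-- The fractional derivative of order `p - 1`, for `1 < p < 2`, as a singular integral and without
its normalising constant: `√𝔇` is `C_𝔣` times the case `p = 3 / 2`. It has the junk value `0` where
the singular integral does not converge absolutely. -/
noncomputable def fracDeriv (p : ℝ) (f : ℝ → ℝ) (u : ℝ) : ℝ :=
  ∫ z, diffQuot p f u z

/-- The commutator of the fractional derivative with multiplication by the variable, applied to `f`;
its kernel is the odd function `z / |z| ^ p`. -/
noncomputable def fracCommutator (p : ℝ) (f : ℝ → ℝ) (u : ℝ) : ℝ :=
  ∫ z, z / |z| ^ p * f (u - z)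

/-- The weight `min |z| 1 / |z| ^ p`, which dominates the difference quotients of bounded Lipschitz
functions. -/
noncomputable def truncWeight (p z : ℝ) : ℝ :=
  min |z| 1 / |z| ^ p

theorem integrable_comp_abs {g : ℝ → ℝ} (hg : IntegrableOn g (Ioi 0)) :
    Integrable fun x => g |x| := by
  simpa using (integrable_fun_norm_addHaar (volume : Measure ℝ) (f := g)).2 (by simpa using hg)

theorem truncWeight_nonneg (z : ℝ) : 0 ≤ truncWeight p z :=
  div_nonneg (le_min (abs_nonneg z) zero_le_one) (by positivity)

theorem integrable_truncWeight (hp₁ : 1 < p) (hp₂ : p < 2) : Integrable (truncWeight p) := by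
  have near_zero : IntegrableOn (fun z : ℝ => min z 1 / z ^ p) (Ioc 0 1) := by
    refine ((intervalIntegrable_iff_integrableOn_Ioc_of_le zero_le_one).1
      (intervalIntegral.intervalIntegrable_rpow' (by linarith : -1 < 1 - p))).congr_fun
      (fun z hz => ?_) measurableSet_Ioc
    simp only [min_eq_left hz.2, Real.rpow_sub hz.1, Real.rpow_one]
  have near_infinity : IntegrableOn (fun z : ℝ => min z 1 / z ^ p) (Ioi 1) := by
    refine (integrableOn_Ioi_rpow_of_lt (by linarith : -p < -1) one_pos).congr_fun
      (fun z (hz : 1 < z) => ?_) measurableSet_Ioi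
    simp only [min_eq_right hz.le, Real.rpow_neg (zero_le_one.trans hz.le), one_div]
  refine integrable_comp_abs (g := fun z => min z 1 / z ^ p) ?_
  rw [← Ioc_union_Ioi_eq_Ioi zero_le_one]
  exact near_zero.union near_infinity

section Lipschitz

variable {f : ℝ → ℝ} {K : NNReal} {M : ℝ}

theorem abs_diffQuot_le (hf : LipschitzWith K f) (hM : ∀ x, |f x| ≤ M) (u z : ℝ) :
    |diffQuot p f u z| ≤ (K + 2 * M) * truncWeight p z := by
  have hK : |f u - f (u - z)| ≤ K * |z| := by
    simpa [Real.dist_eq] using hf.dist_le_mul u (u - z)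
  have hM₀ : 0 ≤ M := (abs_nonneg _).trans (hM 0)
  have h2M : |f u - f (u - z)| ≤ 2 * M := by
    linarith [abs_sub (f u) (f (u - z)), hM u, hM (u - z)]
  rw [diffQuot, truncWeight, abs_div, abs_of_nonneg (by positivity : 0 ≤ |z| ^ p), ← mul_div_assoc]
  gcongr
  rcases le_total |z| 1 with hz | hz
  · rw [min_eq_left hz]; nlinarith [abs_nonneg z]
  · rw [min_eq_right hz]; linarith [K.coe_nonneg]

theorem measurable_diffQuot (hf : Measurable f) :
    Measurable fun q : ℝ × ℝ => diffQuot p f q.1 q.2 := by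
  unfold diffQuot; fun_prop

theorem integrable_diffQuot (hp₁ : 1 < p) (hp₂ : p < 2) (hf : LipschitzWith K f)
    (hM : ∀ x, |f x| ≤ M) (u : ℝ) : Integrable (diffQuot p f u) :=
  ((integrable_truncWeight hp₁ hp₂).const_mul _).mono'
    ((measurable_diffQuot hf.continuous.measurable).comp
      measurable_prodMk_left).aestronglyMeasurable
    (Eventually.of_forall (abs_diffQuot_le hf hM u))

theorem measurable_fracDeriv (hf : Measurable f) : Measurable (fracDeriv p f) :=
  (measurable_diffQuot hf).stronglyMeasurable.integral_prod_right' (ν := volume) |>.measurable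

theorem abs_fracDeriv_le (hp₁ : 1 < p) (hp₂ : p < 2) (hf : LipschitzWith K f)
    (hM : ∀ x, |f x| ≤ M) (u : ℝ) : |fracDeriv p f u| ≤ (K + 2 * M) * ∫ z, truncWeight p z := by
  rw [← integral_const_mul]
  exact norm_integral_le_of_norm_le (f := diffQuot p f u)
    ((integrable_truncWeight hp₁ hp₂).const_mul _) (Eventually.of_forall (abs_diffQuot_le hf hM u))

end Lipschitz

section Algebra

variable {f g : ℝ → ℝ} {u : ℝ}

theorem fracDeriv_neg (f : ℝ → ℝ) (u : ℝ) : fracDeriv p (fun x => -f x) u = -fracDeriv p f u := by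
  simp only [fracDeriv, diffQuot, ← integral_neg]
  exact integral_congr_ae (Eventually.of_forall fun z => by ring)

theorem diffQuot_const_mul (c : ℝ) (f : ℝ → ℝ) (u z : ℝ) :
    diffQuot p (fun x => c * f x) u z = c * diffQuot p f u z := by
  simp only [diffQuot]; ring

theorem integrable_diffQuot_const_mul (c : ℝ) (hf : Integrable (diffQuot p f u)) :
    Integrable (diffQuot p (fun x => c * f x) u) :=
  (hf.const_mul c).congr (Eventually.of_forall fun z => (diffQuot_const_mul c f u z).symm)

theorem fracDeriv_const_mul (c : ℝ) (f : ℝ → ℝ) (u : ℝ) :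
    fracDeriv p (fun x => c * f x) u = c * fracDeriv p f u := by
  simp only [fracDeriv, diffQuot_const_mul, integral_const_mul]

theorem diffQuot_add (f g : ℝ → ℝ) (u z : ℝ) :
    diffQuot p (fun x => f x + g x) u z = diffQuot p f u z + diffQuot p g u z := by
  simp only [diffQuot]; ring

theorem fracDeriv_add (hf : Integrable (diffQuot p f u)) (hg : Integrable (diffQuot p g u)) :
    fracDeriv p (fun x => f x + g x) u = fracDeriv p f u + fracDeriv p g u := by
  simp only [fracDeriv, diffQuot_add, integral_add hf hg]

theorem diffQuot_add_mul (c : ℝ) (f : ℝ → ℝ) (u z : ℝ) :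
    diffQuot p (fun x => (c + x) * f x) u z
      = (c + u) * diffQuot p f u z + z / |z| ^ p * f (u - z) := by
  simp only [diffQuot]; ring

theorem fracDeriv_add_mul (c : ℝ) (hf : Integrable (diffQuot p f u))
    (hf' : Integrable fun z => z / |z| ^ p * f (u - z)) :
    fracDeriv p (fun x => (c + x) * f x) u
      = (c + u) * fracDeriv p f u + fracCommutator p f u := by
  simp only [fracDeriv, fracCommutator, diffQuot_add_mul, integral_add (hf.const_mul _) hf',
    integral_const_mul]

theorem fracDeriv_comp_mul_sub (f : ℝ → ℝ) {N : ℝ} (hN : 0 < N) (y a : ℝ) :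
    fracDeriv p (fun x => f (N * (y - x))) a = N ^ p * N⁻¹ * fracDeriv p f (N * (y - a)) := by
  have scaled (z : ℝ) : diffQuot p (fun x => f (N * (y - x))) a z
      = N ^ p * diffQuot p f (N * (y - a)) (N * -z) := by
    have hNp : N ^ p ≠ 0 := (Real.rpow_pos_of_pos hN p).ne'
    rw [diffQuot, diffQuot, abs_mul, abs_neg, abs_of_pos hN, Real.mul_rpow hN.le (abs_nonneg z),
      ← mul_div_assoc, mul_div_mul_left _ _ hNp,
      show N * (y - (a - z)) = N * (y - a) - N * -z by ring]
  simp only [fracDeriv, scaled, integral_const_mul]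
  rw [integral_neg_eq_self (fun z => diffQuot p f (N * (y - a)) (N * z)),
    Measure.integral_comp_mul_left, abs_of_pos (inv_pos.2 hN), smul_eq_mul, mul_assoc]

end Algebra

section TestFunction

variable {f η : ℝ → ℝ} {K L : NNReal} {M : ℝ}

theorem exists_forall_abs_le (hη : LipschitzWith L η) (hc : HasCompactSupport η) :
    ∃ M, ∀ x, |η x| ≤ M := by
  simpa only [Real.norm_eq_abs] using hη.continuous.bounded_above_of_compact_support hc

theorem abs_diffQuot_le_of_tsupport (hη : LipschitzWith L η) (hM : ∀ x, |η x| ≤ M) (u z : ℝ) :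
    |diffQuot p η u z| ≤ (L + 2 * M) * truncWeight p z *
      ((tsupport η).indicator 1 u + (tsupport η).indicator 1 (u - z)) := by
  have bound := abs_diffQuot_le (p := p) hη hM u z
  have bound₀ : 0 ≤ (L + 2 * M) * truncWeight p z := (abs_nonneg _).trans bound
  by_cases hu : u ∈ tsupport η <;> by_cases hz : u - z ∈ tsupport η
  · simp only [indicator_of_mem hu, indicator_of_mem hz, Pi.one_apply]; linarith
  · simpa only [indicator_of_mem hu, indicator_of_notMem hz, Pi.one_apply, add_zero, mul_one]
  · simpa only [indicator_of_notMem hu, indicator_of_mem hz, Pi.one_apply, zero_add, mul_one]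
  · simp [diffQuot, image_eq_zero_of_notMem_tsupport hu, image_eq_zero_of_notMem_tsupport hz,
      indicator_of_notMem hu, indicator_of_notMem hz]

theorem integrable_prod_diffQuot (hp₁ : 1 < p) (hp₂ : p < 2) (hη : LipschitzWith L η)
    (hc : HasCompactSupport η) : Integrable fun q : ℝ × ℝ => diffQuot p η q.1 q.2 := by
  obtain ⟨M, hM⟩ := exists_forall_abs_le hη hc
  set ρ : ℝ → ℝ := (tsupport η).indicator 1
  have hρ : Integrable ρ :=
    (integrable_indicator_iff (isClosed_tsupport η).measurableSet).2
      (integrableOn_const hc.isCompact.measure_lt_top.ne)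
  have hw := integrable_truncWeight hp₁ hp₂
  have left : Integrable fun q : ℝ × ℝ => truncWeight p q.2 * ρ q.1 :=
    (hρ.mul_prod hw).congr (Eventually.of_forall fun q => mul_comm _ _)
  have right : Integrable fun q : ℝ × ℝ => truncWeight p q.2 * ρ (q.1 - q.2) :=
    hw.convolution_integrand (ContinuousLinearMap.mul ℝ ℝ) hρ
  refine ((left.add right).const_mul (L + 2 * M)).mono'
    (measurable_diffQuot hη.continuous.measurable).aestronglyMeasurable
    (Eventually.of_forall fun q => (abs_diffQuot_le_of_tsupport hη hM q.1 q.2).trans_eq ?_)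
  simp only [Pi.add_apply, ρ]; ring

theorem integrable_fracDeriv (hp₁ : 1 < p) (hp₂ : p < 2) (hη : LipschitzWith L η)
    (hc : HasCompactSupport η) : Integrable (fracDeriv p η) :=
  (integrable_prod_diffQuot hp₁ hp₂ hη hc).integral_prod_left

theorem integral_translate_diffQuot (hf : LipschitzWith K f) (hM : ∀ x, |f x| ≤ M)
    (hη : Integrable η) (z : ℝ) :
    ∫ u, f u * diffQuot p η u z = ∫ u, η u * diffQuot p f u (-z) := by
  have hfη (g : ℝ → ℝ) (hg : Integrable g) : Integrable fun u => f u * g u :=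
    hg.bdd_mul hf.continuous.aestronglyMeasurable (Eventually.of_forall hM)
  have hshift : Integrable fun u => f (u + z) * η u :=
    hη.bdd_mul (by have := hf.continuous; fun_prop) (Eventually.of_forall fun u => hM (u + z))
  calc ∫ u, f u * diffQuot p η u z
      = ∫ u, (f u * η u - f u * η (u - z)) / |z| ^ p := by
        congr with u; simp only [diffQuot]; ring
    _ = ((∫ u, f u * η u) - ∫ u, f (u - z + z) * η (u - z)) / |z| ^ p := by
        simp only [sub_add_cancel]
        rw [integral_div, integral_sub (hfη η hη) (hfη _ (hη.comp_sub_right z))]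
    _ = ((∫ u, f u * η u) - ∫ u, f (u + z) * η u) / |z| ^ p := by
        rw [integral_sub_right_eq_self fun u => f (u + z) * η u]
    _ = ∫ u, η u * diffQuot p f u (-z) := by
        rw [← integral_sub (hfη η hη) hshift, ← integral_div]
        congr with u; simp only [diffQuot, abs_neg, sub_neg_eq_add]; ring

theorem integral_mul_fracDeriv_comm (hp₁ : 1 < p) (hp₂ : p < 2) (hf : LipschitzWith K f)
    (hM : ∀ x, |f x| ≤ M) (hη : LipschitzWith L η) (hc : HasCompactSupport η) :
    ∫ u, f u * fracDeriv p η u = ∫ u, η u * fracDeriv p f u := by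
  have hη_int : Integrable η := hη.continuous.integrable_of_hasCompactSupport hc
  have left : Integrable fun q : ℝ × ℝ => f q.1 * diffQuot p η q.1 q.2 :=
    (integrable_prod_diffQuot hp₁ hp₂ hη hc).bdd_mul
      (hf.continuous.comp continuous_fst).aestronglyMeasurable
      (Eventually.of_forall fun q => hM q.1)
  have right : Integrable fun q : ℝ × ℝ => η q.1 * diffQuot p f q.1 q.2 := by
    refine (hη_int.norm.mul_prod ((integrable_truncWeight hp₁ hp₂).const_mul (K + 2 * M))).mono'
      ((hη.continuous.measurable.comp measurable_fst).mul
        (measurable_diffQuot hf.continuous.measurable)).aestronglyMeasurable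
      (Eventually.of_forall fun q => ?_)
    rw [norm_mul]
    exact mul_le_mul_of_nonneg_left (abs_diffQuot_le hf hM q.1 q.2) (norm_nonneg _)
  calc ∫ u, f u * fracDeriv p η u
      = ∫ z, ∫ u, f u * diffQuot p η u z := by
        simp only [fracDeriv, ← integral_const_mul]; exact integral_integral_swap left
    _ = ∫ z, ∫ u, η u * diffQuot p f u z := by
        simp only [integral_translate_diffQuot hf hM hη_int]
        exact integral_neg_eq_self (fun z => ∫ u, η u * diffQuot p f u z) volume
    _ = ∫ u, η u * fracDeriv p f u := by
        rw [← integral_integral_swap right]; simp only [fracDeriv, integral_const_mul]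

theorem integral_fracDeriv_eq_zero (hp₁ : 1 < p) (hp₂ : p < 2) (hη : LipschitzWith L η)
    (hc : HasCompactSupport η) : ∫ u, fracDeriv p η u = 0 := by
  have := integral_mul_fracDeriv_comm hp₁ hp₂ (LipschitzWith.const (1 : ℝ))
    (fun _ => abs_one.le) hη hc
  simpa [fracDeriv, diffQuot] using this

end TestFunction

/-- The sup-convolution `x ↦ sup_y (f y - K * |x - y|)`: the least `K`-Lipschitz majorant of `f`. It
is used for functions bounded above, so that the supremum is not a junk value. -/
noncomputable def supConv (K : NNReal) (f : ℝ → ℝ) (x : ℝ) : ℝ :=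
  ⨆ y, (f y - K * |x - y|)

section SupConv

variable {f η : ℝ → ℝ} {K L : NNReal} {M x y : ℝ}

theorem sub_mul_abs_le_supConv (hM : ∀ x, f x ≤ M) (x y : ℝ) :
    f y - K * |x - y| ≤ supConv K f x := by
  refine le_ciSup (f := fun y => f y - K * |x - y|) ⟨M, ?_⟩ y
  rintro _ ⟨y, rfl⟩
  exact (sub_le_self _ (by positivity)).trans (hM y)

theorem le_supConv (hM : ∀ x, f x ≤ M) (x : ℝ) : f x ≤ supConv K f x := by
  simpa using sub_mul_abs_le_supConv (K := K) hM x x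

theorem supConv_le (hM : ∀ x, f x ≤ M) (x : ℝ) : supConv K f x ≤ M :=
  ciSup_le fun y => (sub_le_self _ (by positivity)).trans (hM y)

theorem abs_supConv_le (hM : ∀ x, |f x| ≤ M) (x : ℝ) : |supConv K f x| ≤ M :=
  abs_le.2 ⟨(abs_le.1 (hM x)).1.trans (le_supConv (fun y => (abs_le.1 (hM y)).2) x),
    supConv_le (fun y => (abs_le.1 (hM y)).2) x⟩

theorem lipschitzWith_supConv (hM : ∀ x, f x ≤ M) : LipschitzWith K (supConv K f) := by
  refine LipschitzWith.of_le_add_mul K fun x x' => ciSup_le fun y => ?_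
  have triangle : K * |x' - y| ≤ K * (|x - x'| + |x - y|) := by
    gcongr; rw [abs_sub_comm x x']; exact abs_sub_le _ _ _
  rw [Real.dist_eq]
  linarith [sub_mul_abs_le_supConv (K := K) hM x' y]

theorem exists_supConv_eq (hf : Continuous f) (hM : ∀ x, |f x| ≤ M) (hK : 0 < K) (x : ℝ) :
    ∃ y, supConv K f x = f y - K * |x - y| := by
  have eventually_le : ∀ᶠ y in cocompact ℝ, f y - K * |x - y| ≤ f x - K * |x - x| := by
    have : Tendsto (fun y => K * |x - y|) (cocompact ℝ) atTop :=
      (tendsto_dist_left_cocompact_atTop x).const_mul_atTop hK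
    filter_upwards [this.eventually_ge_atTop (2 * M)] with y hy
    simp only [sub_self, abs_zero, mul_zero, sub_zero]
    linarith [abs_le.1 (hM x), abs_le.1 (hM y)]
  obtain ⟨y, hy⟩ := Continuous.exists_forall_ge' (f := fun y => f y - K * |x - y|)
    (by fun_prop) x eventually_le
  exact ⟨y, le_antisymm (ciSup_le hy) (sub_mul_abs_le_supConv (fun y => (abs_le.1 (hM y)).2) x y)⟩

theorem mul_abs_sub_le_of_supConv_eq (hM : ∀ x, |f x| ≤ M)
    (hy : supConv K f x = f y - K * |x - y|) :
    K * |x - y| ≤ 2 * M := by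
  linarith [le_supConv (K := K) (fun y => (abs_le.1 (hM y)).2) x, abs_le.1 (hM x), abs_le.1 (hM y)]

/- Translated by `y - x` and lowered by `K * |x - y|`, the graph of `f` touches that of its
sup-convolution at `x` from below. -/
theorem fracDeriv_supConv_le (hp₁ : 1 < p) (hp₂ : p < 2) (hM : ∀ x, |f x| ≤ M)
    (hy : supConv K f x = f y - K * |x - y|) (hf : Integrable (diffQuot p f y)) :
    fracDeriv p (supConv K f) x ≤ fracDeriv p f y := by
  have hM' (y : ℝ) : f y ≤ M := (abs_le.1 (hM y)).2
  refine integral_mono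
    (integrable_diffQuot hp₁ hp₂ (lipschitzWith_supConv hM') (abs_supConv_le hM) x) hf fun z => ?_
  have shifted := sub_mul_abs_le_supConv (K := K) hM' (x - z) (y - z)
  rw [sub_sub_sub_cancel_right] at shifted
  rw [diffQuot, diffQuot, hy]
  gcongr ?_ / _
  linarith

theorem tendsto_supConv (hf : Continuous f) (hM : ∀ x, |f x| ≤ M) (x : ℝ) :
    Tendsto (fun n : ℕ => supConv (n + 1) f x) atTop (𝓝 (f x)) := by
  have hM' (y : ℝ) : f y ≤ M := (abs_le.1 (hM y)).2
  choose y hy using fun n : ℕ => exists_supConv_eq (K := n + 1) hf hM (by positivity) x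
  have tendsto_y : Tendsto y atTop (𝓝 x) := by
    have : Tendsto (fun n : ℕ => 2 * M / (n + 1 : ℝ)) atTop (𝓝 0) := by
      simpa [div_eq_mul_inv] using tendsto_one_div_add_atTop_nhds_zero_nat.const_mul (2 * M)
    refine tendsto_iff_dist_tendsto_zero.2 (squeeze_zero (fun _ => dist_nonneg) (fun n => ?_) this)
    rw [dist_comm, Real.dist_eq, le_div_iff₀' (by positivity)]
    exact_mod_cast mul_abs_sub_le_of_supConv_eq hM (hy n)
  refine tendsto_of_tendsto_of_tendsto_of_le_of_le tendsto_const_nhds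
    ((hf.tendsto x).comp tendsto_y) (fun n => le_supConv hM' x) (fun n => ?_)
  rw [hy n]
  exact sub_le_self _ (by positivity)

theorem eventually_fracDeriv_supConv_le (hp₁ : 1 < p) (hp₂ : p < 2) (hf : Continuous f)
    (hM : ∀ x, |f x| ≤ M) (hInt : ∀ u, Integrable (diffQuot p f u)) {S U : Set ℝ} {B : ℝ}
    (hS : IsCompact S) (hU : IsOpen U) (hSU : S ⊆ U) (hB : ∀ u ∈ U, fracDeriv p f u ≤ B) :
    ∀ᶠ n : ℕ in atTop, ∀ x ∈ S, fracDeriv p (supConv (n + 1) f) x ≤ B := by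
  obtain ⟨δ, hδ, hδU⟩ := hS.exists_cthickening_subset_open hU hSU
  have : Tendsto (fun n : ℕ => ((n : ℝ) + 1) * δ) atTop atTop :=
    (tendsto_atTop_add_const_right _ _ tendsto_natCast_atTop_atTop).atTop_mul_const hδ
  filter_upwards [this.eventually_ge_atTop (2 * M)] with n hn x hx
  obtain ⟨y, hy⟩ := exists_supConv_eq (K := n + 1) hf hM (by positivity) x
  have near : |x - y| ≤ δ := by
    have := mul_abs_sub_le_of_supConv_eq hM hy
    push_cast at this
    exact le_of_mul_le_mul_left (this.trans hn) (by positivity)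
  refine (fracDeriv_supConv_le hp₁ hp₂ hM hy (hInt y)).trans (hB y (hδU ?_))
  exact Metric.mem_cthickening_of_dist_le y x δ S hx (by rwa [dist_comm, Real.dist_eq])

theorem integral_mul_fracDeriv_le_of_lipschitz (hp₁ : 1 < p) (hp₂ : p < 2) (hf : LipschitzWith K f)
    (hM : ∀ x, |f x| ≤ M) (hη : LipschitzWith L η) (hc : HasCompactSupport η) (hη₀ : ∀ x, 0 ≤ η x)
    {B : ℝ} (hB : ∀ u ∈ tsupport η, fracDeriv p f u ≤ B) :
    ∫ u, f u * fracDeriv p η u ≤ B * ∫ u, η u := by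
  have hη_int : Integrable η := hη.continuous.integrable_of_hasCompactSupport hc
  have hη_frac : Integrable fun u => η u * fracDeriv p f u :=
    hη_int.mul_bdd (measurable_fracDeriv hf.continuous.measurable).aestronglyMeasurable
      (Eventually.of_forall (abs_fracDeriv_le hp₁ hp₂ hf hM))
  rw [integral_mul_fracDeriv_comm hp₁ hp₂ hf hM hη hc, ← integral_const_mul]
  refine integral_mono hη_frac (hη_int.const_mul B) fun u => ?_
  by_cases hu : u ∈ tsupport η
  · simpa only [mul_comm B] using mul_le_mul_of_nonneg_left (hB u hu) (hη₀ u)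
  · simp only [image_eq_zero_of_notMem_tsupport hu, zero_mul, mul_zero, le_refl]

theorem integral_mul_fracDeriv_le (hp₁ : 1 < p) (hp₂ : p < 2) (hf : Continuous f)
    (hM : ∀ x, |f x| ≤ M) (hInt : ∀ u, Integrable (diffQuot p f u))
    (hη : LipschitzWith L η) (hc : HasCompactSupport η) (hη₀ : ∀ x, 0 ≤ η x)
    {U : Set ℝ} {B : ℝ} (hU : IsOpen U) (hηU : tsupport η ⊆ U) (hB : ∀ u ∈ U, fracDeriv p f u ≤ B) :
    ∫ u, f u * fracDeriv p η u ≤ B * ∫ u, η u := by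
  have hM' (y : ℝ) : f y ≤ M := (abs_le.1 (hM y)).2
  have hη_frac := integrable_fracDeriv hp₁ hp₂ hη hc
  have limit : Tendsto (fun n : ℕ => ∫ u, supConv (n + 1) f u * fracDeriv p η u) atTop
      (𝓝 (∫ u, f u * fracDeriv p η u)) := by
    refine tendsto_integral_of_dominated_convergence (fun u => M * ‖fracDeriv p η u‖) (fun n => ?_)
      (hη_frac.norm.const_mul M) (fun n => Eventually.of_forall fun u => ?_)
      (Eventually.of_forall fun u => (tendsto_supConv hf hM u).mul_const _)
    · exact (lipschitzWith_supConv hM').continuous.aestronglyMeasurable.mul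
        hη_frac.aestronglyMeasurable
    · rw [norm_mul]
      exact mul_le_mul_of_nonneg_right (abs_supConv_le hM u) (norm_nonneg _)
  refine le_of_tendsto limit ?_
  filter_upwards [eventually_fracDeriv_supConv_le hp₁ hp₂ hf hM hInt hc.isCompact hU hηU hB]
    with n hn
  exact integral_mul_fracDeriv_le_of_lipschitz hp₁ hp₂ (lipschitzWith_supConv hM')
    (abs_supConv_le hM) hη hc hη₀ hn

theorem abs_integral_mul_fracDeriv_le (hp₁ : 1 < p) (hp₂ : p < 2) (hf : Continuous f)
    (hM : ∀ x, |f x| ≤ M) (hInt : ∀ u, Integrable (diffQuot p f u))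
    (hη : LipschitzWith L η) (hc : HasCompactSupport η) (hη₀ : ∀ x, 0 ≤ η x)
    {U : Set ℝ} {B : ℝ} (hU : IsOpen U) (hηU : tsupport η ⊆ U)
    (hB : ∀ u ∈ U, |fracDeriv p f u| ≤ B) :
    |∫ u, f u * fracDeriv p η u| ≤ B * ∫ u, η u := by
  have upper := integral_mul_fracDeriv_le hp₁ hp₂ hf hM hInt hη hc hη₀ hU hηU
    fun u hu => (le_abs_self _).trans (hB u hu)
  have lower := integral_mul_fracDeriv_le (f := fun x => -f x) hp₁ hp₂ hf.neg (by simpa using hM)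
    (fun u => (hInt u).neg.congr (Eventually.of_forall fun z => by simp [diffQuot]; ring))
    hη hc hη₀ hU hηU fun u hu => (fracDeriv_neg f u).le.trans ((neg_le_abs _).trans (hB u hu))
  simp only [neg_mul, integral_neg] at lower
  exact abs_le.2 ⟨by linarith, upper⟩

end SupConv

section Asymptotics

variable {H η : ℝ → ℝ} {L : NNReal} {t y N : ℝ}

theorem fracDeriv_eq_neg_integral (ht : η t = 0) :
    fracDeriv p η t = -∫ s, η s / |t - s| ^ p := by
  rw [← integral_sub_left_eq_self _ volume t, ← integral_neg]
  simp only [fracDeriv, diffQuot, ht, zero_sub, sub_sub_cancel, neg_div]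

theorem abs_rpow_mul_fracDeriv (ht₀ : t ≠ 0) (ht : η t = 0) :
    |t| ^ p * fracDeriv p η t = -∫ s, η s / |1 - s * t⁻¹| ^ p := by
  rw [fracDeriv_eq_neg_integral ht, mul_neg, ← integral_const_mul]
  congr 2 with s
  rw [show 1 - s * t⁻¹ = (t - s) / t by field_simp, abs_div, Real.div_rpow (by positivity)
    (by positivity), div_div_eq_mul_div, mul_comm (η s), mul_div_assoc]

theorem tendsto_abs_rpow_mul_fracDeriv (hp : 0 ≤ p) (hη : Continuous η) (hc : HasCompactSupport η) :
    Tendsto (fun t => |t| ^ p * fracDeriv p η t) (Bornology.cobounded ℝ) (𝓝 (-∫ s, η s)) := by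
  obtain ⟨R, hR, hηR⟩ := hc.isCompact.isBounded.subset_closedBall_lt 0 0
  have support_le {s : ℝ} (hs : η s ≠ 0) : |s| ≤ R := by
    simpa using hηR (subset_tsupport η hs)
  have large : ∀ᶠ t : ℝ in Bornology.cobounded ℝ, 2 * R ≤ |t| :=
    tendsto_norm_cobounded_atTop.eventually_ge_atTop (2 * R)
  have limit : Tendsto (fun t => ∫ s, η s / |1 - s * t⁻¹| ^ p) (Bornology.cobounded ℝ)
      (𝓝 (∫ s, η s)) := by
    have : (Bornology.cobounded ℝ).IsCountablyGenerated := by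
      rw [← comap_norm_atTop]; infer_instance
    refine tendsto_integral_filter_of_dominated_convergence (fun s => |η s| * 2 ^ p)
      (Eventually.of_forall fun t => Measurable.aestronglyMeasurable (by fun_prop)) ?_
      ((hη.integrable_of_hasCompactSupport hc).abs.mul_const _) (Eventually.of_forall fun s => ?_)
    · filter_upwards [large] with t ht
      refine Eventually.of_forall fun s => ?_
      by_cases hs : η s = 0
      · simp [hs]
      have : |s * t⁻¹| ≤ 1 / 2 := by
        rw [abs_mul, abs_inv, ← div_eq_mul_inv, div_le_iff₀ (by linarith)]
        linarith [support_le hs]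
      have half_le : 1 / 2 ≤ |1 - s * t⁻¹| := by
        linarith [abs_sub_abs_le_abs_sub 1 (s * t⁻¹), abs_one (α := ℝ)]
      rw [norm_div, Real.norm_eq_abs, Real.norm_of_nonneg (by positivity), div_eq_mul_inv,
        ← Real.inv_rpow (abs_nonneg _)]
      gcongr
      exact inv_le_of_inv_le₀ two_pos (by linarith)
    · have : Tendsto (fun t => |1 - s * t⁻¹| ^ p) (Bornology.cobounded ℝ) (𝓝 1) := by
        simpa using ((tendsto_inv₀_cobounded.const_mul s).const_sub 1).abs.rpow_const (Or.inr hp)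
      simpa only [div_one, Pi.div_def] using (tendsto_const_nhds (x := η s)).div this one_ne_zero
  refine limit.neg.congr' ?_
  filter_upwards [large] with t ht
  have ht₀ : t ≠ 0 := by rintro rfl; rw [abs_zero] at ht; linarith
  refine (abs_rpow_mul_fracDeriv ht₀ ?_).symm
  by_contra hηt
  linarith [support_le hηt]

theorem exists_abs_rpow_mul_fracDeriv_le (hp₁ : 1 < p) (hp₂ : p < 2) (hη : LipschitzWith L η)
    (hc : HasCompactSupport η) : ∃ A, ∀ t, |(|t| ^ p * fracDeriv p η t)| ≤ A := by
  obtain ⟨M, hM⟩ := exists_forall_abs_le hη hc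
  have far := (tendsto_abs_rpow_mul_fracDeriv (by linarith)
    hη.continuous hc).abs.eventually_le_const (lt_add_one _)
  rw [← comap_norm_atTop, eventually_comap, eventually_atTop] at far
  obtain ⟨R, hR⟩ := far
  refine ⟨max (|-∫ s, η s| + 1) (R ^ p * ((L + 2 * M) * ∫ z, truncWeight p z)), fun t => ?_⟩
  rcases le_total R |t| with ht | ht
  · exact le_max_of_le_left (hR _ ht t rfl)
  · have hR₀ : 0 ≤ R := (abs_nonneg t).trans ht
    refine le_max_of_le_right ?_
    rw [abs_mul, abs_of_nonneg (by positivity : 0 ≤ |t| ^ p)]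
    gcongr
    exact abs_fracDeriv_le hp₁ hp₂ hη hM t

theorem integrable_diffQuot_mul (hp₁ : 1 < p) (hp₂ : p < 2) (hη : LipschitzWith L η)
    (hc : HasCompactSupport η) (hH : Integrable (diffQuot p H y)) (N : ℝ) :
    Integrable fun w => diffQuot p H y w * (|N * w| ^ p * fracDeriv p η (N * w)) := by
  obtain ⟨A, hA⟩ := exists_abs_rpow_mul_fracDeriv_le hp₁ hp₂ hη hc
  have := measurable_fracDeriv (p := p) hη.continuous.measurable
  exact hH.mul_bdd (c := A) (Measurable.aestronglyMeasurable (by fun_prop))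
    (Eventually.of_forall fun w => hA (N * w))

theorem integral_diffQuot_mul (hp₁ : 1 < p) (hp₂ : p < 2) (hη : LipschitzWith L η)
    (hc : HasCompactSupport η) (hH : Integrable (diffQuot p H y)) (hN : 0 < N) :
    ∫ w, diffQuot p H y w * (|N * w| ^ p * fracDeriv p η (N * w))
      = -(N ^ p * ∫ a, H a * fracDeriv p η (N * (y - a))) := by
  have cancel : (fun w => diffQuot p H y w * (|N * w| ^ p * fracDeriv p η (N * w)))
      =ᵐ[volume] fun w => (H y - H (y - w)) * (N ^ p * fracDeriv p η (N * w)) := by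
    filter_upwards [Measure.ae_ne volume 0] with w hw
    have : |w| ^ p ≠ 0 := (Real.rpow_pos_of_pos (abs_pos.2 hw) p).ne'
    rw [diffQuot, abs_mul, abs_of_pos hN, Real.mul_rpow hN.le (abs_nonneg w)]
    field_simp
  have frac_int : Integrable fun w => H y * (N ^ p * fracDeriv p η (N * w)) :=
    (((integrable_fracDeriv hp₁ hp₂ hη hc).comp_mul_left' hN.ne').const_mul _).const_mul _
  have frac_zero : ∫ w, H y * (N ^ p * fracDeriv p η (N * w)) = 0 := by
    rw [integral_const_mul, integral_const_mul, Measure.integral_comp_mul_left,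
      integral_fracDeriv_eq_zero hp₁ hp₂ hη hc, smul_zero, mul_zero, mul_zero]
  have diff_int := (integrable_diffQuot_mul hp₁ hp₂ hη hc hH N).congr cancel
  have H_int : Integrable fun w => H (y - w) * (N ^ p * fracDeriv p η (N * w)) :=
    (frac_int.sub diff_int).congr (Eventually.of_forall fun w => by simp only [Pi.sub_apply]; ring)
  rw [integral_congr_ae cancel]
  simp only [sub_mul]
  rw [integral_sub frac_int H_int, frac_zero, zero_sub, ← integral_const_mul,
    ← integral_sub_left_eq_self _ volume y]
  simp only [sub_sub_cancel, mul_left_comm]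

/- `|t| ^ p * fracDeriv p η t` is bounded and tends to `-∫ η` at infinity, so evaluated at `N * w`
it may be inserted into the singular integral, where its limit as `N → ∞` is taken. -/
theorem tendsto_rpow_mul_integral_mul_fracDeriv (hp₁ : 1 < p) (hp₂ : p < 2) (hη : LipschitzWith L η)
    (hc : HasCompactSupport η) (hH : Integrable (diffQuot p H y)) :
    Tendsto (fun N => N ^ p * ∫ a, H a * fracDeriv p η (N * (y - a))) atTop
      (𝓝 ((∫ s, η s) * fracDeriv p H y)) := by
  obtain ⟨A, hA⟩ := exists_abs_rpow_mul_fracDeriv_le hp₁ hp₂ hη hc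
  have limit : Tendsto
      (fun N => ∫ w, diffQuot p H y w * (|N * w| ^ p * fracDeriv p η (N * w))) atTop
      (𝓝 (∫ w, diffQuot p H y w * -∫ s, η s)) := by
    refine tendsto_integral_filter_of_dominated_convergence (fun w => ‖diffQuot p H y w‖ * A)
      (Eventually.of_forall fun N =>
        (integrable_diffQuot_mul hp₁ hp₂ hη hc hH N).aestronglyMeasurable)
      (Eventually.of_forall fun N => Eventually.of_forall fun w => ?_) (hH.norm.mul_const A) ?_
    · rw [norm_mul]
      exact mul_le_mul_of_nonneg_left (hA (N * w)) (norm_nonneg _)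
    · filter_upwards [Measure.ae_ne volume 0] with w hw
      have : Tendsto (· * w) atTop (Bornology.cobounded ℝ) :=
        (tendsto_mul_right_cobounded hw).comp IsOrderBornology.atTop_le_cobounded
      exact ((tendsto_abs_rpow_mul_fracDeriv (by linarith) hη.continuous hc).comp this).const_mul _
  have := limit.neg
  rw [integral_mul_const, ← fracDeriv, mul_neg, neg_neg, mul_comm] at this
  refine this.congr' ?_
  filter_upwards [eventually_gt_atTop 0] with N hN
  rw [integral_diffQuot_mul hp₁ hp₂ hη hc hH hN, neg_neg]

end Asymptotics

section Rescaling

variable {f η : ℝ → ℝ} {L : NNReal} {M N B y : ℝ}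

theorem lipschitzWith_comp_mul_sub (hη : LipschitzWith L η) (N y : ℝ) :
    LipschitzWith (L * ‖N‖₊) fun x => η (N * (y - x)) := by
  refine hη.comp (LipschitzWith.of_dist_le_mul fun x x' => le_of_eq ?_)
  rw [Real.dist_eq, ← mul_sub, sub_sub_sub_cancel_left, abs_mul, abs_sub_comm, Real.dist_eq]
  rfl

theorem tsupport_comp_mul_sub_subset {R : ℝ} (hN : 0 < N)
    (hR : tsupport η ⊆ Metric.closedBall 0 R) (y : ℝ) :
    tsupport (fun x => η (N * (y - x))) ⊆ Metric.closedBall y (R / N) := by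
  refine closure_minimal (fun x hx => ?_) Metric.isClosed_closedBall
  have := hR (subset_tsupport η hx)
  rw [mem_closedBall_zero_iff, norm_mul, Real.norm_of_nonneg hN.le] at this
  rwa [Metric.mem_closedBall', dist_eq_norm, le_div_iff₀' hN]

theorem abs_rpow_mul_integral_mul_fracDeriv_le (hp₁ : 1 < p) (hp₂ : p < 2) (hf : Continuous f)
    (hM : ∀ x, |f x| ≤ M) (hInt : ∀ u, Integrable (diffQuot p f u))
    (hη : LipschitzWith L η) (hc : HasCompactSupport η) (hη₀ : ∀ x, 0 ≤ η x)
    (hN : 0 < N) {U : Set ℝ} (hU : IsOpen U) (hηU : tsupport (fun x => η (N * (y - x))) ⊆ U)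
    (hB : ∀ u ∈ U, |fracDeriv p f u| ≤ B) :
    |N ^ p * ∫ a, f a * fracDeriv p η (N * (y - a))| ≤ B * ∫ s, η s := by
  obtain ⟨R, hR⟩ := hc.isCompact.isBounded.subset_closedBall 0
  have hcN : HasCompactSupport fun x => η (N * (y - x)) :=
    (isCompact_closedBall y (R / N)).of_isClosed_subset (isClosed_tsupport _)
      (tsupport_comp_mul_sub_subset hN hR y)
  have weak := abs_integral_mul_fracDeriv_le hp₁ hp₂ hf hM hInt
    (lipschitzWith_comp_mul_sub hη N y) hcN (fun x => hη₀ _) hU hηU hB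
  have mass : ∫ x, η (N * (y - x)) = N⁻¹ * ∫ s, η s := by
    rw [integral_sub_left_eq_self (fun x => η (N * x)) volume y, Measure.integral_comp_mul_left,
      abs_of_pos (inv_pos.2 hN), smul_eq_mul]
  simp only [fracDeriv_comp_mul_sub η hN, mul_left_comm (f _), integral_const_mul, mass] at weak
  rw [mul_right_comm, mul_comm _ N⁻¹, abs_mul, abs_of_pos (inv_pos.2 hN), mul_left_comm] at weak
  exact le_of_mul_le_mul_left weak (inv_pos.2 hN)

end Rescaling

section ParametricIntegral

variable {α : Type*} [MeasurableSpace α] {μ : Measure α} [SFinite μ] {g : α → ℝ → ℝ} {h₀ h : α → ℝ}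
  {η : ℝ → ℝ} {L : NNReal} {N y : ℝ}

theorem integral_integral_mul_fracDeriv (hp₁ : 1 < p) (hp₂ : p < 2) (hη : LipschitzWith L η)
    (hc : HasCompactSupport η) (hN : N ≠ 0) (hg : Measurable fun q : α × ℝ => g q.1 q.2)
    (hg_le : ∀ z a, |g z a| ≤ h₀ z) (h₀_int : Integrable h₀ μ) :
    ∫ a, (∫ z, g z a ∂μ) * fracDeriv p η (N * (y - a))
      = ∫ z, (∫ a, g z a * fracDeriv p η (N * (y - a))) ∂μ := by
  have hη_frac : Integrable fun a => fracDeriv p η (N * (y - a)) :=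
    ((integrable_fracDeriv hp₁ hp₂ hη hc).comp_mul_left' hN).comp_sub_left y
  have prod_int : Integrable (fun q : α × ℝ => g q.1 q.2 * fracDeriv p η (N * (y - q.2)))
      (μ.prod volume) :=
    (h₀_int.mul_prod hη_frac.norm).mono'
      (hg.aestronglyMeasurable.mul hη_frac.aestronglyMeasurable.comp_snd)
      (Eventually.of_forall fun q => by
        rw [norm_mul]
        exact mul_le_mul_of_nonneg_right (hg_le q.1 q.2) (norm_nonneg _))
  rw [integral_integral_swap prod_int]
  simp only [integral_mul_const]

/- The iterated singular integral of `∫ z, g z · ∂μ` need not converge absolutely, so the bound is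
obtained by testing against bumps concentrating at `y`. -/
theorem abs_fracDeriv_integral_le (hp₁ : 1 < p) (hp₂ : p < 2)
    (hg : Measurable fun q : α × ℝ => g q.1 q.2) (hg_cont : ∀ z, Continuous (g z))
    (hg_le : ∀ z a, |g z a| ≤ h₀ z) (h₀_int : Integrable h₀ μ)
    (hInt : ∀ z a, Integrable (diffQuot p (g z) a))
    (hB : ∀ᶠ a in 𝓝 y, ∀ z, |fracDeriv p (g z) a| ≤ h z) (h_int : Integrable h μ)
    (hG : Integrable (diffQuot p (fun a => ∫ z, g z a ∂μ) y)) :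
    |fracDeriv p (fun a => ∫ z, g z a ∂μ) y| ≤ ∫ z, h z ∂μ := by
  let η : ContDiffBump (0 : ℝ) := default
  obtain ⟨L, hη⟩ := ContDiff.lipschitzWith_of_hasCompactSupport η.hasCompactSupport
    (η.contDiff (n := 1)) one_ne_zero
  have hc := η.hasCompactSupport
  obtain ⟨U, hUB, hU, hyU⟩ := eventually_nhds_iff.1 hB
  have concentrate : ∀ᶠ N : ℝ in atTop, Metric.closedBall y (η.rOut / N) ⊆ U :=
    (tendsto_const_nhds.div_atTop tendsto_id).eventually
      (eventually_closedBall_subset (hU.mem_nhds hyU))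
  have weak : ∀ᶠ N : ℝ in atTop,
      |N ^ p * ∫ a, (∫ z, g z a ∂μ) * fracDeriv p η (N * (y - a))| ≤ (∫ z, h z ∂μ) * ∫ s, η s := by
    filter_upwards [eventually_gt_atTop 0, concentrate] with N hN hNU
    have hsupp := tsupport_comp_mul_sub_subset hN η.tsupport_eq.subset y
    rw [integral_integral_mul_fracDeriv hp₁ hp₂ hη hc hN.ne' hg hg_le h₀_int, ← integral_const_mul,
      ← integral_mul_const]
    have slice (z : α) : ‖N ^ p * ∫ a, g z a * fracDeriv p η (N * (y - a))‖ ≤ h z * ∫ s, η s :=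
      abs_rpow_mul_integral_mul_fracDeriv_le hp₁ hp₂ (hg_cont z) (hg_le z) (hInt z) hη hc
        (fun x => η.nonneg) hN hU (hsupp.trans hNU) fun u hu => hUB u hu z
    exact norm_integral_le_of_norm_le (h_int.mul_const _) (Eventually.of_forall slice)
  have bound := le_of_tendsto
    (tendsto_rpow_mul_integral_mul_fracDeriv hp₁ hp₂ hη hc hG).abs weak
  have η_pos : 0 < ∫ s, η s := η.integral_pos
  rw [abs_mul, abs_of_pos η_pos, mul_comm] at bound
  exact le_of_mul_le_mul_right bound η_pos

end ParametricIntegral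

/-- The Riesz potential of order `2 - p` of the exponential `z ↦ exp (-lam * |z|)`, without its
normalising constant. -/
noncomputable def expPotential (p lam y : ℝ) : ℝ :=
  ∫ z, |z| ^ (1 - p) * Real.exp (-lam * |y - z|)

section ExpPotential

variable {lam : ℝ} {f : ℝ → ℝ} {C y : ℝ}

theorem integrable_exp_neg_mul_abs (hlam : 0 < lam) : Integrable fun z => Real.exp (-lam * |z|) :=
  integrable_comp_abs (g := fun z => Real.exp (-lam * z)) (exp_neg_integrableOn_Ioi 0 hlam)

theorem one_add_mul_exp_le (hlam : 0 < lam) {t : ℝ} (ht : 0 ≤ t) :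
    (1 + t) * Real.exp (-lam * t) ≤ (1 + 2 / lam) * Real.exp (-(lam / 2) * t) := by
  have one_add_le : 1 + t ≤ (1 + 2 / lam) * Real.exp (lam / 2 * t) := by
    have := Real.add_one_le_exp (lam / 2 * t)
    calc 1 + t ≤ (1 + 2 / lam) * (lam / 2 * t + 1) := by
          have : (1 + 2 / lam) * (lam / 2 * t + 1) = 1 + t + (lam / 2 * t + 2 / lam) := by
            field_simp; ring
          rw [this]; linarith [show 0 ≤ lam / 2 * t + 2 / lam by positivity]
      _ ≤ _ := by gcongr
  calc (1 + t) * Real.exp (-lam * t)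
      ≤ (1 + 2 / lam) * Real.exp (lam / 2 * t) * Real.exp (-lam * t) := by gcongr
    _ = (1 + 2 / lam) * Real.exp (-(lam / 2) * t) := by
        rw [mul_assoc, ← Real.exp_add]; ring_nf

theorem abs_rpow_one_sub_le (hp₁ : 1 < p) (z : ℝ) : |z| ^ (1 - p) ≤ 1 + truncWeight p z := by
  rcases le_total 1 |z| with hz | hz
  · linarith [Real.rpow_le_one_of_one_le_of_nonpos hz (by linarith : 1 - p ≤ 0),
      truncWeight_nonneg (p := p) z]
  · rcases eq_or_ne z 0 with rfl | hz₀
    · rw [abs_zero, Real.zero_rpow (by linarith)]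
      linarith [truncWeight_nonneg (p := p) 0]
    · rw [truncWeight, min_eq_left hz, Real.rpow_sub (abs_pos.2 hz₀), Real.rpow_one]
      linarith

theorem one_add_abs_rpow_mul_le (hp₁ : 1 < p) (hp₂ : p < 2) (y z : ℝ) :
    (1 + |y|) ^ (p - 1) * |z| ^ (1 - p) ≤ (2 + truncWeight p z) * (1 + |y - z|) := by
  have split : 1 + |y| ≤ (1 + |z|) * (1 + |y - z|) := by
    nlinarith [abs_sub_abs_le_abs_sub y z, abs_nonneg z, abs_nonneg (y - z)]
  have cancel : |z| ^ (p - 1) * |z| ^ (1 - p) ≤ 1 := by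
    rw [← neg_sub p 1, Real.rpow_neg (abs_nonneg z)]
    exact mul_inv_le_one
  have subadditive : (1 + |z|) ^ (p - 1) ≤ 1 + |z| ^ (p - 1) := by
    simpa using Real.rpow_add_le_add_rpow zero_le_one (abs_nonneg z) (by linarith) (by linarith)
  have linear : (1 + |y - z|) ^ (p - 1) ≤ 1 + |y - z| :=
    Real.rpow_le_self_of_one_le (by linarith [abs_nonneg (y - z)]) (by linarith)
  calc (1 + |y|) ^ (p - 1) * |z| ^ (1 - p)
      ≤ ((1 + |z|) * (1 + |y - z|)) ^ (p - 1) * |z| ^ (1 - p) := by gcongr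
    _ = (1 + |z|) ^ (p - 1) * |z| ^ (1 - p) * (1 + |y - z|) ^ (p - 1) := by
        rw [Real.mul_rpow (by positivity) (by positivity)]; ring
    _ ≤ (1 + |z| ^ (p - 1)) * |z| ^ (1 - p) * (1 + |y - z|) := by gcongr
    _ ≤ (2 + truncWeight p z) * (1 + |y - z|) := by
        gcongr; linarith [abs_rpow_one_sub_le hp₁ z]

theorem one_add_abs_rpow_mul_exp_le (hp₁ : 1 < p) (hp₂ : p < 2) (hlam : 0 < lam) (y z : ℝ) :
    (1 + |y|) ^ (p - 1) * (|z| ^ (1 - p) * Real.exp (-lam * |y - z|))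
      ≤ (1 + 2 / lam) * (2 * Real.exp (-(lam / 2) * |y - z|) + truncWeight p z) := by
  have hw := truncWeight_nonneg (p := p) z
  have exp_le_one : Real.exp (-(lam / 2) * |y - z|) ≤ 1 :=
    Real.exp_le_one_iff.2 (by nlinarith [abs_nonneg (y - z)])
  calc (1 + |y|) ^ (p - 1) * (|z| ^ (1 - p) * Real.exp (-lam * |y - z|))
      ≤ (2 + truncWeight p z) * (1 + |y - z|) * Real.exp (-lam * |y - z|) := by
        rw [← mul_assoc]; gcongr ?_ * _; exact one_add_abs_rpow_mul_le hp₁ hp₂ y z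
    _ ≤ (2 + truncWeight p z) * ((1 + 2 / lam) * Real.exp (-(lam / 2) * |y - z|)) := by
        rw [mul_assoc]
        exact mul_le_mul_of_nonneg_left (one_add_mul_exp_le hlam (abs_nonneg _)) (by linarith)
    _ = (1 + 2 / lam) * (2 * Real.exp (-(lam / 2) * |y - z|)
          + truncWeight p z * Real.exp (-(lam / 2) * |y - z|)) := by ring
    _ ≤ _ := by gcongr; exact mul_le_of_le_one_right hw exp_le_one

theorem integrable_expPotential (hp₁ : 1 < p) (hp₂ : p < 2) (hlam : 0 < lam) (y : ℝ) :
    Integrable fun z => |z| ^ (1 - p) * Real.exp (-lam * |y - z|) := by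
  have dominating := ((((integrable_exp_neg_mul_abs (half_pos hlam)).comp_sub_left y).const_mul
    2).add (integrable_truncWeight hp₁ hp₂)).const_mul (1 + 2 / lam)
  refine dominating.mono' (Measurable.aestronglyMeasurable (by fun_prop))
    (Eventually.of_forall fun z => ?_)
  rw [Real.norm_of_nonneg (by positivity)]
  refine le_trans (le_mul_of_one_le_left (by positivity) ?_)
    (one_add_abs_rpow_mul_exp_le hp₁ hp₂ hlam y z)
  exact Real.one_le_rpow (by linarith [abs_nonneg y]) (by linarith)

theorem expPotential_nonneg (p lam y : ℝ) : 0 ≤ expPotential p lam y :=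
  integral_nonneg fun z => by positivity

theorem exists_expPotential_le (hp₁ : 1 < p) (hp₂ : p < 2) (hlam : 0 < lam) :
    ∃ W > 0, ∀ y, expPotential p lam y ≤ W * (1 + y ^ 2) ^ ((1 - p) / 2) := by
  have exp_int := integrable_exp_neg_mul_abs (half_pos hlam)
  have w_int := integrable_truncWeight hp₁ hp₂
  set W := (1 + 2 / lam) * (2 * (∫ z, Real.exp (-(lam / 2) * |z|)) + ∫ z, truncWeight p z)
  have hW : 0 < W := by
    have := integral_exp_pos exp_int
    have : 0 ≤ ∫ z, truncWeight p z := integral_nonneg fun z => truncWeight_nonneg z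
    positivity
  refine ⟨W, hW, fun y => ?_⟩
  have weighted : (1 + |y|) ^ (p - 1) * expPotential p lam y ≤ W := by
    rw [expPotential, ← integral_const_mul]
    refine (integral_mono ((integrable_expPotential hp₁ hp₂ hlam y).const_mul _)
      ((((exp_int.comp_sub_left y).const_mul 2).add w_int).const_mul (1 + 2 / lam))
      (one_add_abs_rpow_mul_exp_le hp₁ hp₂ hlam y)).trans_eq ?_
    rw [integral_const_mul, integral_add' ((exp_int.comp_sub_left y).const_mul 2) w_int,
      integral_const_mul, integral_sub_left_eq_self (fun z => Real.exp (-(lam / 2) * |z|)) volume y]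
  have bracket_le : (1 + y ^ 2) ^ ((p - 1) / 2) ≤ (1 + |y|) ^ (p - 1) := by
    have : 1 + y ^ 2 ≤ (1 + |y|) ^ (2 : ℝ) := by
      rw [Real.rpow_two]; nlinarith [sq_abs y, abs_nonneg y]
    refine (Real.rpow_le_rpow (by positivity) this (by linarith)).trans_eq ?_
    rw [← Real.rpow_mul (by positivity), mul_div_cancel₀ _ two_ne_zero]
  rw [show (1 - p) / 2 = -((p - 1) / 2) by ring, Real.rpow_neg (by positivity), ← div_eq_mul_inv,
    le_div_iff₀' (by positivity)]
  exact (mul_le_mul_of_nonneg_right bracket_le (expPotential_nonneg _ _ _)).trans weighted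

theorem abs_div_abs_rpow (hp : p ≠ 1) (z : ℝ) : |z / |z| ^ p| = |z| ^ (1 - p) := by
  rcases eq_or_ne z 0 with rfl | hz
  · simp [Real.zero_rpow (sub_ne_zero.2 hp.symm)]
  · rw [abs_div, abs_of_nonneg (by positivity : 0 ≤ |z| ^ p), Real.rpow_sub (abs_pos.2 hz),
      Real.rpow_one]

theorem abs_div_abs_rpow_mul_le (hp : p ≠ 1) (hf : ∀ x, |f x| ≤ C * Real.exp (-lam * |x|))
    (y z : ℝ) :
    |z / |z| ^ p * f (y - z)| ≤ C * (|z| ^ (1 - p) * Real.exp (-lam * |y - z|)) := by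
  rw [abs_mul, abs_div_abs_rpow hp, mul_left_comm]
  exact mul_le_mul_of_nonneg_left (hf (y - z)) (by positivity)

theorem integrable_div_abs_rpow_mul (hp₁ : 1 < p) (hp₂ : p < 2) (hlam : 0 < lam)
    (hf : Measurable f) (hf_le : ∀ x, |f x| ≤ C * Real.exp (-lam * |x|)) (y : ℝ) :
    Integrable fun z => z / |z| ^ p * f (y - z) :=
  ((integrable_expPotential hp₁ hp₂ hlam y).const_mul C).mono'
    (Measurable.aestronglyMeasurable (by fun_prop))
    (Eventually.of_forall (abs_div_abs_rpow_mul_le hp₁.ne' hf_le y))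

theorem abs_fracCommutator_le (hp₁ : 1 < p) (hp₂ : p < 2) (hlam : 0 < lam)
    (hf_le : ∀ x, |f x| ≤ C * Real.exp (-lam * |x|)) (y : ℝ) :
    |fracCommutator p f y| ≤ C * expPotential p lam y := by
  rw [fracCommutator, expPotential, ← integral_const_mul]
  exact norm_integral_le_of_norm_le (f := fun z => z / |z| ^ p * f (y - z))
    ((integrable_expPotential hp₁ hp₂ hlam y).const_mul C)
    (Eventually.of_forall (abs_div_abs_rpow_mul_le hp₁.ne' hf_le y))

end ExpPotential

section Diagonal

variable {χ : ℝ → ℝ → ℝ} {C₀ C lam y : ℝ}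

theorem measurable_fracDeriv_uncurry (hχ : Continuous fun q : ℝ × ℝ => χ q.1 q.2) (y : ℝ) :
    Measurable fun a => fracDeriv p (χ a) y := by
  have : Measurable fun q : ℝ × ℝ => diffQuot p (χ q.1) y q.2 := by
    have hy : Measurable fun q : ℝ × ℝ => χ q.1 y :=
      (hχ.comp (continuous_fst.prodMk continuous_const)).measurable
    have hz : Measurable fun q : ℝ × ℝ => χ q.1 (y - q.2) :=
      (hχ.comp (continuous_fst.prodMk (continuous_const.sub continuous_snd))).measurable
    exact (hy.sub hz).div (by fun_prop)
  exact (this.stronglyMeasurable.integral_prod_right' (ν := volume)).measurable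

theorem abs_fracDeriv_fracCommutator_le (hp₁ : 1 < p) (hp₂ : p < 2) (hlam : 0 < lam)
    (hχ : Continuous fun q : ℝ × ℝ => χ q.1 q.2)
    (hχ_le : ∀ a b, |χ a b| ≤ C₀ * Real.exp (-lam * |b|))
    (hInt : ∀ a b, Integrable (diffQuot p (fun x => χ x b) a))
    (hG : Integrable (diffQuot p (fun a => fracCommutator p (χ a) y) y))
    (hB : ∀ᶠ a in 𝓝 y, ∀ b, |fracDeriv p (fun x => χ x b) a| ≤ C * Real.exp (-lam * |b|)) :
    |fracDeriv p (fun a => fracCommutator p (χ a) y) y| ≤ C * expPotential p lam y := by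
  have h_int (K : ℝ) := (integrable_expPotential hp₁ hp₂ hlam y).const_mul K
  have slice_measurable : Measurable fun q : ℝ × ℝ => χ q.2 (y - q.1) :=
    (hχ.comp (continuous_snd.prodMk (continuous_const.sub continuous_fst))).measurable
  have slice_continuous (b : ℝ) : Continuous fun x => χ x b :=
    hχ.comp (continuous_id.prodMk continuous_const)
  rw [expPotential, ← integral_const_mul]
  refine abs_fracDeriv_integral_le (g := fun z a => z / |z| ^ p * χ a (y - z)) hp₁ hp₂
    ((by fun_prop : Measurable fun q : ℝ × ℝ => q.1 / |q.1| ^ p).mul slice_measurable)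
    (fun z => (slice_continuous _).const_mul _)
    (fun z a => abs_div_abs_rpow_mul_le hp₁.ne' (hχ_le a) y z) (h_int C₀)
    (fun z a => ?_) ?_ (h_int C) hG
  · exact integrable_diffQuot_const_mul _ (hInt a (y - z))
  · filter_upwards [hB] with a ha z
    rw [fracDeriv_const_mul, abs_mul, abs_div_abs_rpow hp₁.ne', mul_left_comm]
    exact mul_le_mul_of_nonneg_left (ha (y - z)) (by positivity)

theorem eventually_one_add_sq_rpow_le (r y : ℝ) :
    ∀ᶠ a in 𝓝 y, (1 + a ^ 2) ^ r ≤ 2 * (1 + y ^ 2) ^ r := by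
  have : ContinuousAt (fun a : ℝ => (1 + a ^ 2) ^ r) y :=
    ContinuousAt.rpow_const (by fun_prop) (Or.inl (by positivity))
  exact this.eventually_le_const (lt_two_mul_self (by positivity))

theorem abs_fracDeriv_fracDeriv_add_mul_le (hp₁ : 1 < p) (hp₂ : p < 2) (hlam : 0 < lam)
    (hC : 0 ≤ C) (hχ : Continuous fun q : ℝ × ℝ => χ q.1 q.2)
    (hχ_le : ∀ a b, |χ a b| ≤ C₀ * Real.exp (-lam * |b|))
    (hInt₁ : ∀ a b, Integrable (diffQuot p (fun x => χ x b) a))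
    (hInt₂ : ∀ a, Integrable (diffQuot p (χ a) y))
    (hInt₁₂ : Integrable (diffQuot p (fun a => fracDeriv p (χ a) y) y))
    (hInt : Integrable (diffQuot p (fun a => fracDeriv p (fun b => (a + b) * χ a b) y) y))
    (h₁ : ∀ a b, |fracDeriv p (fun x => χ x b) a|
      ≤ C * (1 + a ^ 2) ^ (-p / 2) * Real.exp (-lam * |b|))
    (h₂ : ∀ a, |fracDeriv p (χ a) y| ≤ C * (1 + y ^ 2) ^ (-p / 2) * Real.exp (-lam * |a|)) :
    |fracDeriv p (fun a => fracDeriv p (fun b => (a + b) * χ a b) y) y|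
      ≤ 2 * |y| * |fracDeriv p (fun a => fracDeriv p (χ a) y) y|
        + 3 * C * (1 + y ^ 2) ^ (-p / 2) * expPotential p lam y := by
  set F : ℝ → ℝ := fun a => fracDeriv p (χ a) y
  set G : ℝ → ℝ := fun a => fracCommutator p (χ a) y
  have leibniz₂ : (fun a => fracDeriv p (fun b => (a + b) * χ a b) y)
      = fun a => (y + a) * F a + G a := by
    ext a
    rw [add_comm y a]
    exact fracDeriv_add_mul a (hInt₂ a) (integrable_div_abs_rpow_mul hp₁ hp₂ hlam
      (hχ.comp (continuous_const.prodMk continuous_id)).measurable (hχ_le a) y)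
  have comm_int := integrable_div_abs_rpow_mul hp₁ hp₂ hlam
    (measurable_fracDeriv_uncurry hχ y) h₂ y
  have left_int : Integrable (diffQuot p (fun a => (y + a) * F a) y) :=
    ((hInt₁₂.const_mul (y + y)).add comm_int).congr
      (Eventually.of_forall fun z => (diffQuot_add_mul y F y z).symm)
  have G_int : Integrable (diffQuot p G y) := by
    refine (hInt.sub left_int).congr (Eventually.of_forall fun z => ?_)
    simp only [leibniz₂, diffQuot_add, Pi.sub_apply, add_sub_cancel_left]
  have leibniz : fracDeriv p (fun a => fracDeriv p (fun b => (a + b) * χ a b) y) y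
      = 2 * y * fracDeriv p F y + fracCommutator p F y + fracDeriv p G y := by
    rw [leibniz₂, fracDeriv_add left_int G_int, fracDeriv_add_mul y hInt₁₂ comm_int, two_mul]
  have F_le : |fracCommutator p F y| ≤ C * (1 + y ^ 2) ^ (-p / 2) * expPotential p lam y :=
    abs_fracCommutator_le hp₁ hp₂ hlam h₂ y
  have G_le : |fracDeriv p G y| ≤ C * (2 * (1 + y ^ 2) ^ (-p / 2)) * expPotential p lam y := by
    refine abs_fracDeriv_fracCommutator_le hp₁ hp₂ hlam hχ hχ_le hInt₁ G_int ?_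
    filter_upwards [eventually_one_add_sq_rpow_le (-p / 2) y] with a ha b
    exact (h₁ a b).trans (by gcongr)
  rw [leibniz]
  have first : |2 * y * fracDeriv p F y| = 2 * |y| * |fracDeriv p F y| := by
    rw [abs_mul, abs_mul, abs_two]
  linarith [abs_add_three (2 * y * fracDeriv p F y) (fracCommutator p F y) (fracDeriv p G y)]

theorem two_mul_abs_mul_rpow_add_mul_rpow_le {r A B : ℝ} (hA : 0 ≤ A) (y : ℝ) :
    2 * |y| * (A * (1 + y ^ 2) ^ (-r)) + B * (1 + y ^ 2) ^ (-r / 2) * (1 + y ^ 2) ^ ((1 - r) / 2)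
      ≤ (2 * A + B) * (1 + y ^ 2) ^ (1 / 2 - r) := by
  have base_pos : 0 < 1 + y ^ 2 := by positivity
  have abs_le : |y| ≤ (1 + y ^ 2) ^ (1 / 2 : ℝ) := by
    rw [← Real.sqrt_eq_rpow]; exact Real.abs_le_sqrt (by linarith)
  have combine₁ : (1 + y ^ 2) ^ (1 / 2 : ℝ) * (1 + y ^ 2) ^ (-r) = (1 + y ^ 2) ^ (1 / 2 - r) := by
    rw [← Real.rpow_add base_pos, sub_eq_add_neg]
  have combine₂ : (1 + y ^ 2) ^ (-r / 2) * (1 + y ^ 2) ^ ((1 - r) / 2)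
      = (1 + y ^ 2) ^ (1 / 2 - r) := by
    rw [← Real.rpow_add base_pos]; ring_nf
  calc _ ≤ 2 * (1 + y ^ 2) ^ (1 / 2 : ℝ) * (A * (1 + y ^ 2) ^ (-r))
        + B * (1 + y ^ 2) ^ (-r / 2) * (1 + y ^ 2) ^ ((1 - r) / 2) := by gcongr
    _ = (2 * A + B) * (1 + y ^ 2) ^ (1 / 2 - r) := by
        rw [mul_assoc B, combine₂, ← combine₁]; ring

theorem stmt_11_general (hp₁ : 1 < p) (hp₂ : p < 2) (c : ℝ) (hC₀ : 0 < C₀) (hlam : 0 < lam) :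
    ∃ C > 0, ∀ φ : ℝ → ℝ → ℝ,
      Continuous (fun q : ℝ × ℝ => φ q.1 q.2) →
      (∀ a b, |φ a b| ≤ C₀ * Real.exp (-lam * |b|)) →
      (∀ a b, Integrable (diffQuot p (fun x => φ x b) a)) →
      (∀ a b, Integrable (diffQuot p (φ a) b)) →
      (∀ y, Integrable (diffQuot p (fun a => c * fracDeriv p (φ a) y) y)) →
      (∀ y, Integrable
        (diffQuot p (fun a => c * fracDeriv p (fun b => (a + b) * φ a b) y) y)) →
      (∀ a b, |c * fracDeriv p (fun x => φ x b) a|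
        ≤ C₀ * (1 + a ^ 2) ^ (-p / 2) * Real.exp (-lam * |b|)) →
      (∀ a b, |c * fracDeriv p (φ a) b|
        ≤ C₀ * (1 + b ^ 2) ^ (-p / 2) * Real.exp (-lam * |a|)) →
      (∀ y, |c * fracDeriv p (fun a => c * fracDeriv p (φ a) y) y| ≤ C₀ * (1 + y ^ 2) ^ (-p)) →
      ∀ y, |c * fracDeriv p (fun a => c * fracDeriv p (fun b => (a + b) * φ a b) y) y|
        ≤ C * (1 + y ^ 2) ^ (1 / 2 - p) := by
  obtain ⟨W, hW, hW_le⟩ := exists_expPotential_le hp₁ hp₂ hlam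
  refine ⟨2 * C₀ + |c| * (3 * C₀) * W, by positivity, ?_⟩
  intro φ hφ hφ_le hInt₁ hInt₂ hInt₁₂ hInt h₁ h₂ h₁₂ y
  have core := abs_fracDeriv_fracDeriv_add_mul_le (χ := fun a b => c * φ a b) (C₀ := |c| * C₀)
    (y := y) hp₁ hp₂ hlam hC₀.le (hφ.const_mul c)
    (fun a b => by rw [abs_mul, mul_assoc]; gcongr; exact hφ_le a b)
    (fun a b => integrable_diffQuot_const_mul c (hInt₁ a b))
    (fun a => integrable_diffQuot_const_mul c (hInt₂ a y))
    (by simpa only [fracDeriv_const_mul] using hInt₁₂ y)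
    (by simpa only [mul_left_comm _ c, fracDeriv_const_mul] using hInt y)
    (by simpa only [fracDeriv_const_mul] using h₁)
    (by simpa only [fracDeriv_const_mul] using fun a => h₂ a y)
  simp only [mul_left_comm _ c, fracDeriv_const_mul c] at core h₁₂ ⊢
  have diag := h₁₂ y
  rw [abs_mul] at diag ⊢
  calc _ ≤ |c| * (2 * |y| * |c * fracDeriv p (fun a => fracDeriv p (φ a) y) y|
          + 3 * C₀ * (1 + y ^ 2) ^ (-p / 2) * expPotential p lam y) := by gcongr
    _ = 2 * |y| * (|c| * |c * fracDeriv p (fun a => fracDeriv p (φ a) y) y|)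
          + |c| * (3 * C₀) * (1 + y ^ 2) ^ (-p / 2) * expPotential p lam y := by ring
    _ ≤ 2 * |y| * (C₀ * (1 + y ^ 2) ^ (-p))
          + |c| * (3 * C₀) * (1 + y ^ 2) ^ (-p / 2) * (W * (1 + y ^ 2) ^ ((1 - p) / 2)) := by
        gcongr; exact hW_le y
    _ = 2 * |y| * (C₀ * (1 + y ^ 2) ^ (-p))
          + |c| * (3 * C₀) * W * (1 + y ^ 2) ^ (-p / 2) * (1 + y ^ 2) ^ ((1 - p) / 2) := by ring
    _ ≤ _ := two_mul_abs_mul_rpow_add_mul_rpow_le hC₀.le y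

end Diagonal

end

/-- Decay on the diagonal of the cross fractional derivative of `(y₁+y₂)·φ`,
given exponential decay of `φ` and decay of its fractional derivatives. -/
theorem stmt_11 (Cf : ℝ) (hCf : 0 < Cf)
    (hCfdef : 1 / Cf = ∫ z : ℝ, (1 - Real.cos (2 * Real.pi * z)) / |z| ^ ((3:ℝ)/2))
    (C₀ lam : ℝ) (hC₀ : 0 < C₀) (hlam : 0 < lam) :
    ∃ C > (0:ℝ), ∀ φ : ℝ → ℝ → ℝ,
      Continuous (fun p : ℝ × ℝ => φ p.1 p.2) →
      (∀ y₁ y₂ : ℝ, |φ y₁ y₂| ≤ C₀ * Real.exp (-lam * (|y₁| + |y₂|))) →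
      (∀ y₁ y₂ : ℝ,
        Integrable (fun z : ℝ => (φ y₁ y₂ - φ (y₁ - z) y₂) / |z| ^ ((3:ℝ)/2))) →
      (∀ y₁ y₂ : ℝ,
        Integrable (fun z : ℝ => (φ y₁ y₂ - φ y₁ (y₂ - z)) / |z| ^ ((3:ℝ)/2))) →
      (∀ y₁ y₂ : ℝ,
        Integrable (fun z : ℝ =>
          (sqrtD2 Cf φ y₁ y₂ - sqrtD2 Cf φ (y₁ - z) y₂) / |z| ^ ((3:ℝ)/2))) →
      (∀ y₁ y₂ : ℝ,
        Integrable (fun z : ℝ =>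
          ((y₁ + y₂) * φ y₁ y₂ - (y₁ + (y₂ - z)) * φ y₁ (y₂ - z)) / |z| ^ ((3:ℝ)/2))) →
      (∀ y₁ y₂ : ℝ,
        Integrable (fun z : ℝ =>
          (sqrtD2 Cf (fun a b => (a + b) * φ a b) y₁ y₂ -
            sqrtD2 Cf (fun a b => (a + b) * φ a b) (y₁ - z) y₂) / |z| ^ ((3:ℝ)/2))) →
      (∀ y₁ y₂ : ℝ,
        |sqrtD1 Cf φ y₁ y₂| ≤ C₀ * (1 + y₁ ^ 2) ^ (-(3:ℝ)/4) * Real.exp (-lam * |y₂|)) →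
      (∀ y₁ y₂ : ℝ,
        |sqrtD2 Cf φ y₁ y₂| ≤ C₀ * (1 + y₂ ^ 2) ^ (-(3:ℝ)/4) * Real.exp (-lam * |y₁|)) →
      (∀ y : ℝ, |sqrtDD Cf φ y y| ≤ C₀ * (1 + y ^ 2) ^ (-(3:ℝ)/2)) →
      ∀ y : ℝ, |sqrtDD Cf (fun a b => (a + b) * φ a b) y y| ≤ C * (1 + y ^ 2)⁻¹ := by
  obtain ⟨C, hC, bound⟩ := stmt_11_general (p := 3 / 2) (by norm_num) (by norm_num) Cf hC₀ hlam
  refine ⟨C, hC, fun φ hφ hφ_le hInt₁ hInt₂ hInt₁₂ _ hInt h₁ h₂ h₁₂ y => ?_⟩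
  rw [← Real.rpow_neg_one, show (-1 : ℝ) = 1 / 2 - 3 / 2 by norm_num]
  rw [show -(3 : ℝ) / 4 = -(3 / 2) / 2 by norm_num] at h₁ h₂
  rw [neg_div] at h₁₂
  have weak_decay (a b : ℝ) : |φ a b| ≤ C₀ * Real.exp (-lam * |b|) := by
    refine (hφ_le a b).trans ?_
    gcongr C₀ * Real.exp ?_
    nlinarith [abs_nonneg a]
  exact bound φ hφ weak_decay hInt₁ hInt₂ (fun y => hInt₁₂ y y) (fun y => hInt y y) h₁ h₂ h₁₂ y
end
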